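/- Suppose Γ is a configuration satisfying the Working Conditions and having at least one bad vertex. Then for every positive integer N, every embedding of Γ into ℤ^N is either standard or semi-standard. -/

import Mathlib

namespace LensPaper

/-- A finite weighted simple graph: the combinatorial data underlying a configuration
(a disjoint union of weighted linear graphs).  The fact that every connected component
is a path is recorded separately by `Config.IsLinear`. -/
structure Config where
  V : Type
  fin : Fintype V
  deq : DecidableEq V
  graph : SimpleGraph V
  adjDec : DecidableRel graph.Adj
  w : V → ℤ

attribute [instance] Config.fin Config.deq Config.adjDec

namespace Config

/-- The degree of a vertex. -/
noncomputable def deg (C : Config) (v : C.V) : ℕ := (C.graph.neighborSet v).ncard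

/-- A configuration: every component is a path, i.e. all degrees are at most `2` and the
graph is acyclic. -/
def IsLinear (C : Config) : Prop :=
  (∀ v : C.V, C.deg v ≤ 2) ∧ C.graph.IsAcyclic

/-- The adjusted weight `w'(v) = w(v) - deg(v)`. -/
noncomputable def adjw (C : Config) (v : C.V) : ℤ := C.w v - C.deg v

/-- A vertex is bad if it is adjacent to two distinct vertices of positive adjusted
weight. -/
def IsBad (C : Config) (x : C.V) : Prop :=
  ∃ u v : C.V, u ≠ v ∧ C.graph.Adj x u ∧ C.graph.Adj x v ∧ 0 < C.adjw u ∧ 0 < C.adjw v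

/-- A leaf: a vertex of degree at most one. -/
def IsLeaf (C : Config) (v : C.V) : Prop := C.deg v ≤ 1

/-- `v 0, v 1, …, v m` is a chain of consecutive (distinct) vertices. -/
def IsChain (C : Config) (m : ℕ) (v : ℕ → C.V) : Prop :=
  (∀ i ≤ m, ∀ j ≤ m, v i = v j → i = j) ∧ ∀ i < m, C.graph.Adj (v i) (v (i + 1))

/-- The chain `v 0, …, v m` has the list `p` as its sequence of adjusted weights. -/
def ChainPattern (C : Config) (m : ℕ) (v : ℕ → C.V) (p : List ℤ) : Prop :=
  C.IsChain m v ∧ m + 1 = p.length ∧ ∀ i : Fin p.length, C.adjw (v i) = p.get i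

/-- `Γ` contains a chain of consecutive vertices whose adjusted weights, read in order,
form the list `p`. -/
def HasPattern (C : Config) (p : List ℤ) : Prop := ∃ m v, C.ChainPattern m v p

/-- A chain realizing a bad-part pattern `p` (each entry of `p` is an adjusted weight
together with a flag marking the bad positions): the chain has the prescribed adjusted
weights, and the bad vertices of the configuration are exactly the vertices of the chain
in the flagged positions. -/
def IsBadPartChain (C : Config) (p : List (ℤ × Bool)) (m : ℕ) (v : ℕ → C.V) : Prop :=
  C.IsChain m v ∧ m + 1 = p.length ∧
  (∀ i : Fin p.length, C.adjw (v i) = (p.get i).1) ∧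
  (∀ x : C.V, C.IsBad x ↔ ∃ i : Fin p.length, (p.get i).2 = true ∧ v i = x)

end Config

/-- The chains of adjusted weights forbidden by Working Condition VI. -/
def forbiddenPatterns : List (List ℤ) :=
  [[1, 0, 0, 2], [1, 0, 0, 3], [1, 0, 0, 0, 3], [1, 1, 0, 0, 1, 2], [3, 1, 0, 0, 1],
   [1, 0, 1, 2], [1, 0, 1, 3], [1, 1, 0, 2], [1, 1, 0, 1, 1, 2]]

/-- The bad-part patterns of Working Condition VII; `true` marks the bad positions. -/
def badPatterns : List (List (ℤ × Bool)) :=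
  [[(1, false), (0, true), (1, false)],
   [(1, false), (0, true), (2, false)],
   [(1, false), (0, true), (3, false)],
   [(1, false), (1, true), (1, false)],
   [(1, false), (1, true), (2, false)],
   [(1, false), (2, true), (1, false)],
   [(1, false), (0, true), (1, false), (0, true), (1, false)],
   [(1, false), (0, true), (1, false), (0, true), (2, false)],
   [(1, false), (0, true), (1, false), (1, true), (1, false)],
   [(1, false), (0, true), (1, false), (1, true), (2, false)],
   [(1, false), (1, true), (1, true), (1, false)],
   [(1, false), (1, true), (1, true), (1, true), (1, false)],
   [(1, false), (1, true), (2, true), (1, false)]]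

namespace Config

/-- The Working Conditions (I)–(VII). -/
def WorkingConditions (C : Config) : Prop :=
  (∀ v : C.V, 2 ≤ C.w v) ∧
  (∀ v : C.V, C.adjw v ≤ 3) ∧
  (∀ u v : C.V, 1 < C.adjw u → 1 < C.adjw v → u = v) ∧
  (∀ v x : C.V, 1 < C.adjw v → C.IsBad x → C.adjw x = 1 → C.graph.Adj x v) ∧
  ((∃ v : C.V, C.adjw v = 3) →
     ∀ u u' : C.V, C.graph.Adj u u' → C.adjw u = 1 → C.adjw u' = 1 → False) ∧
  (∀ u v x : C.V, C.graph.Adj u v → C.adjw u = 1 → C.adjw v = 1 →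
     C.IsBad x → C.adjw x = 2 → C.graph.Adj x u ∨ C.graph.Adj x v) ∧
  (∀ p ∈ forbiddenPatterns, ¬ C.HasPattern p) ∧
  ((∃ x : C.V, C.IsBad x) → ∃ p ∈ badPatterns, ∃ m v, C.IsBadPartChain p m v)

end Config

/-- The standard inner product on `ℤ^N`. -/
def dot {N : ℕ} (x y : Fin N → ℤ) : ℤ := ∑ i, x i * y i

/-- The support of a vector of `ℤ^N` with respect to the standard orthonormal basis. -/
def supp {N : ℕ} (x : Fin N → ℤ) : Finset (Fin N) :=
  Finset.univ.filter fun i => x i ≠ 0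

namespace Config

/-- An embedding of a configuration into `ℤ^N`. -/
def IsEmbedding (C : Config) (N : ℕ) (φ : C.V → Fin N → ℤ) : Prop :=
  ∀ u v : C.V, dot (φ u) (φ v) =
    if u = v then C.w u else if C.graph.Adj u v then -1 else 0

/-- The restriction of `φ` to `S` is standard. -/
def IsStandardOn (C : Config) (N : ℕ) (φ : C.V → Fin N → ℤ) (S : Set C.V) : Prop :=
  ∀ u ∈ S, ∀ v ∈ S,
    ((supp (φ u) ∩ supp (φ v)).card : ℤ) =
      if u = v then C.w v else if C.graph.Adj u v then 1 else 0

/-- A standard embedding. -/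
def IsStandard (C : Config) (N : ℕ) (φ : C.V → Fin N → ℤ) : Prop :=
  C.IsStandardOn N φ Set.univ

/-- The restriction of `φ` to `S` is semi-standard at `x`. -/
def IsSemiStandardAtOn (C : Config) (N : ℕ) (φ : C.V → Fin N → ℤ) (x : C.V)
    (S : Set C.V) : Prop :=
  (∀ u ∈ S, ∀ v ∈ S,
    ((supp (φ u) ∩ supp (φ v)).card : ℤ) =
      if u = v then C.w v
      else if C.graph.Adj u v then 1
      else if C.graph.Adj x u ∧ C.graph.Adj x v then 2
      else 0) ∧
  (∀ u ∈ S, ∀ v ∈ S, u ≠ v → C.graph.Adj x u → C.graph.Adj x v →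
    (supp (φ u) ∩ supp (φ x) ∩ supp (φ v)).card = 1)

/-- A semi-standard embedding: semi-standard at some bad vertex. -/
def IsSemiStandard (C : Config) (N : ℕ) (φ : C.V → Fin N → ℤ) : Prop :=
  ∃ x : C.V, C.IsBad x ∧ C.IsSemiStandardAtOn N φ x Set.univ

/-- A candidate for the extended bad part: a chain containing the bad part whose two
ends are either leaves or preceded by two consecutive vertices of vanishing adjusted
weight. -/
def IsEBPCand (C : Config) (m : ℕ) (v : ℕ → C.V) : Prop :=
  C.IsChain m v ∧
  (∀ p ∈ badPatterns, ∀ mb vb, C.IsBadPartChain p mb vb →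
     ∀ i ≤ mb, ∃ j ≤ m, v j = vb i) ∧
  (C.IsLeaf (v 0) ∨ (2 ≤ m ∧ C.adjw (v 1) = 0 ∧ C.adjw (v 2) = 0)) ∧
  (C.IsLeaf (v m) ∨ (2 ≤ m ∧ C.adjw (v (m - 1)) = 0 ∧ C.adjw (v (m - 2)) = 0))

/-- The extended bad part: a candidate with the fewest vertices. -/
def IsExtBadPart (C : Config) (m : ℕ) (v : ℕ → C.V) : Prop :=
  C.IsEBPCand m v ∧ ∀ m' v', C.IsEBPCand m' v' → m ≤ m'

/-- The set of vertices of the chain `v 0, …, v m`. -/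
def ebpSet (C : Config) (m : ℕ) (v : ℕ → C.V) : Set C.V := {y | ∃ i ≤ m, v i = y}

/-- The outside part of `Γ` relative to the extended bad part `v 0, …, v m`. -/
def OutsidePart (C : Config) (m : ℕ) (v : ℕ → C.V) : Set C.V :=
  {x | ∀ i ≤ m, v i ≠ x}
  ∪ {x | ¬ C.IsLeaf (v 0) ∧ (x = v 0 ∨ x = v 1 ∨ x = v 2)}
  ∪ {x | ¬ C.IsLeaf (v m) ∧ (x = v m ∨ x = v (m - 1) ∨ x = v (m - 2))}

/-- A screw at the front end of the extended bad part. -/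
def IsFrontScrew (C : Config) (N : ℕ) (φ : C.V → Fin N → ℤ) (m : ℕ) (v : ℕ → C.V)
    (e : Fin N) : Prop :=
  ¬ C.IsLeaf (v 0) ∧ 3 ≤ m ∧ φ (v 2) e ≠ 0 ∧ φ (v 3) e ≠ 0

/-- A screw at the back end of the extended bad part. -/
def IsBackScrew (C : Config) (N : ℕ) (φ : C.V → Fin N → ℤ) (m : ℕ) (v : ℕ → C.V)
    (e : Fin N) : Prop :=
  ¬ C.IsLeaf (v m) ∧ 3 ≤ m ∧ φ (v (m - 2)) e ≠ 0 ∧ φ (v (m - 3)) e ≠ 0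

/-- All screws of `Γ` (with respect to `φ`) are clean. -/
def AllScrewsClean (C : Config) (N : ℕ) (φ : C.V → Fin N → ℤ) (m : ℕ)
    (v : ℕ → C.V) : Prop :=
  (∀ e : Fin N, C.IsFrontScrew N φ m v e →
    ∀ u : C.V, u ≠ v 2 → u ≠ v 3 → φ u e = 0) ∧
  (∀ e : Fin N, C.IsBackScrew N φ m v e →
    ∀ u : C.V, u ≠ v (m - 2) → u ≠ v (m - 3) → φ u e = 0)

end Config

namespace Srch

noncomputable section

structure Vx where
  w : Nat
  d : Nat
  nb : List Nat
  c : Nat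

structure Gr where
  P : Nat
  M : Nat
  m : Nat

def ite' {α : Type} (b : Bool) (x y : α) : α := Bool.rec y x b
def and' (a b : Bool) : Bool := Bool.rec false b a
def or' (a b : Bool) : Bool := Bool.rec b true a
def not' (a : Bool) : Bool := Bool.rec true false a
def frc {α : Type} (x : Nat) (f : Nat → α) : α := Nat.rec (f 0) (fun n _ => f (Nat.succ n)) x

def any' {α : Type} (l : List α) (f : α → Bool) : Bool :=
  List.rec false (fun h _ ih => Bool.rec ih true (f h)) l
def all' {α : Type} (l : List α) (f : α → Bool) : Bool :=
  List.rec true (fun h _ ih => Bool.rec false ih (f h)) l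
def map' {α β : Type} (l : List α) (f : α → β) : List β :=
  List.rec [] (fun h _ ih => f h :: ih) l
def app' {α : Type} (l k : List α) : List α :=
  List.rec k (fun h _ ih => h :: ih) l
def fmap' {α β : Type} (l : List α) (f : α → List β) : List β :=
  List.rec [] (fun h _ ih => app' (f h) ih) l
def filt' {α : Type} (l : List α) (f : α → Bool) : List α :=
  List.rec [] (fun h _ ih => Bool.rec ih (h :: ih) (f h)) l

def mem (i : Nat) (l : List Nat) : Bool := any' l (Nat.beq i)

def dflt : Vx := ⟨0, 0, [], 0⟩

def get (vs : List Vx) : Nat → Vx :=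
  List.rec (fun _ => dflt) (fun h _ ih i => Nat.rec h (fun j _ => ih j) i) vs

/-- graph part of a state: vertices, packed adjusted weights, known bad vertices, heavy vertices -/
structure Gs where
  n : Nat
  vs : List Vx
  W : Nat
  b : List Nat
  h : List Nat

def aw (S : Gs) (i : Nat) : Nat := Nat.mod (Nat.div S.W (Nat.pow 4 i)) 4

def nb (S : Gs) (i : Nat) : List Nat := (get S.vs i).nb

def isBad (S : Gs) (x : Nat) : Bool :=
  List.rec false (fun p r _ => List.rec false (fun q _ _ =>
    and' (Nat.ble 1 (aw S p)) (Nat.ble 1 (aw S q))) r) (nb S x)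

/-- `rng n = [n-1, …, 0]` -/
def rng (n : Nat) : List Nat := Nat.rec [] (fun k ih => k :: ih) n

def walk (S : Gs) (p : List Nat) : List Nat → List Nat → Bool :=
  List.rec (fun _ _ => true) (fun p _ ih cands vis =>
    any' cands fun z => and' (Nat.beq (aw S z) p)
      (and' (not' (mem z vis)) (ih (nb S z) (z :: vis)))) p

def pats2 : List (List Nat) :=
  [[2,0,0,1],[2,1,0,0,1,1],[2,1,0,1],[2,0,1,1],[2,1,1,0,1,1]]
def pats3 : List (List Nat) :=
  [[3,0,0,1],[3,0,0,0,1],[3,1,0,1]]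

def badOK (S : Gs) (b : List Nat) (x : Nat) : Bool :=
  and' (not' (Nat.beq (aw S x) 3)) (all' b fun y => or' (Nat.beq x y)
    (and' (or' (mem y (nb S x)) (any' (nb S x) fun z => mem z (nb S y)))
     (and' (all' (nb S x) fun z => and' (not' (Nat.beq (aw S z) 3))
        (or' (not' (mem z (nb S y))) (Nat.beq (aw S z) 1)))
      (all' b fun z => or' (Nat.beq z x) (or' (Nat.beq z y) (Nat.beq (aw S x) 1))))))

def no11 (S : Gs) (us : List Nat) (f : Nat → Nat → Bool) : Bool :=
  all' us fun u => or' (not' (Nat.beq (aw S u) 1))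
    (all' (nb S u) fun t => or' (not' (Nat.beq (aw S t) 1)) (f u t))

def heavyOK (S : Gs) (b : List Nat) (h : Nat) : Bool :=
  and' (all' b fun x => or' (not' (Nat.beq (aw S x) 1)) (mem h (nb S x)))
  (ite' (Nat.beq (aw S h) 3)
    (and' (no11 S (rng S.n) fun _ _ => false)
     (and' (all' pats3 fun p => not' (walk S p [h] []))
      (not' (walk S [1,0,0,1,3] (rng S.n) []))))
    (and' (or' (not' (mem h b)) (no11 S (rng S.n) fun u t => or' (mem u (nb S h)) (mem t (nb S h))))
      (all' pats2 fun p => not' (walk S p [h] []))))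

def wcok (S : Gs) : Bool :=
  and' (all' S.b fun x => badOK S S.b x) (all' S.h fun h => heavyOK S S.b h)

def cons0 (P M m : Nat) (L : List Gr) : List Gr :=
  Nat.rec L (fun k _ => frc P fun P => frc M fun M => ⟨P, M, Nat.succ k⟩ :: L) m

def pairsG (c : Nat) : List (Nat × Nat) :=
  (List.range (c+1)).flatMap fun a => (List.range (c+1-a)).map fun b => (a,b)

def pairs (c : Nat) : List (Nat × Nat) :=
  Nat.rec [(0,0)] (fun c _ => Nat.rec [(0,0),(1,0),(0,1)]
    (fun c _ => Nat.rec [(0,0),(1,0),(0,1),(2,0),(1,1),(0,2)]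
      (fun c _ => pairsG (c+3)) c) c) c

def blocked (F M : Nat) : Bool := not' (Nat.beq (Nat.land M F) 0)

def bnd (F : Nat) (G : List Gr) : Nat :=
  List.rec 0 (fun g _ ih => ite' (blocked F g.M) ih (ite' (Nat.ble g.P ih) ih g.P)) G

def mk (P M m bit a b : Nat) (L : List Gr) : List Gr :=
  cons0 (Nat.add (Nat.mul 16 P) 1) (Nat.lor M bit) a (cons0 (Nat.mul 16 P) M (Nat.sub m (Nat.add a b))
    (cons0 (Nat.sub (Nat.mul 16 P) 1) (Nat.lor M bit) b L))

def near (w B x y : Nat) : Bool :=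
  and' (Nat.ble x (Nat.add y (Nat.mul w B))) (Nat.ble y (Nat.add x (Nat.mul w B)))

def split (F bit : Nat) (G : List Gr) : Nat → Nat → Nat → List (List Gr) :=
  List.rec (fun w x y => ite' (Nat.beq x y) [cons0 1 bit w []] [])
   (fun g G ih w x y =>
    ite' (near w (bnd F (g :: G)) x y)
      (ite' (blocked F g.M) (map' (ih w x y) (cons0 (Nat.mul 16 g.P) g.M g.m))
        (fmap' (pairs (ite' (Nat.ble w g.m) w g.m)) fun ab =>
          map' (ih (Nat.sub w (Nat.add ab.1 ab.2)) (Nat.add x (Nat.mul ab.1 g.P))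
              (Nat.add y (Nat.mul ab.2 g.P)))
            (mk g.P g.M g.m bit ab.1 ab.2)))
      []) G

def tgt (A : List Nat) (n : Nat) : Nat :=
  Nat.rec 0 (fun n ih => Nat.add (Nat.mul 16 ih) (ite' (mem n A) 1 0)) n

def code (a b : Nat) : Nat :=
  ite' (Nat.ble a b) (Nat.add (Nat.mul 8 b) a) (Nat.add (Nat.mul 8 a) b)

def forb (vs : List Vx) (thr w d : Nat) (A : List Nat) (n : Nat) : Nat :=
  Nat.rec 0 (fun n ih => ite' (and' (not' (mem n A))
      (and' (Nat.ble (Nat.succ (code w (get vs n).w)) thr)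
      (or' (Nat.ble w d) (Nat.ble (get vs n).w (get vs n).d))))
      (Nat.lor ih (Nat.pow 2 n)) ih) n

structure St where
  S : Gs
  G : List Gr

def addL {α : Type} (n : Nat) (A cs : List Nat) (c0 : Nat) (t : Vx) (vs : List Vx) :
    Nat → (List Vx → α) → α :=
  List.rec (fun _ k => k [t]) (fun v _ ih i k => frc (ite' (mem v.c cs) c0 v.c) fun c =>
    Bool.rec (ih (Nat.succ i) fun r => k (⟨v.w, v.d, v.nb, c⟩ :: r))
      (ih (Nat.succ i) fun r => k (⟨v.w, v.d, n :: v.nb, c⟩ :: r)) (mem i A)) vs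

def head' (l : List Nat) (n : Nat) : Nat := List.rec n (fun h _ _ => h) l

def newb (S : Gs) (l : List Nat) (b : List Nat) : List Nat :=
  List.rec b (fun x _ ih => Bool.rec ih (x :: ih) (and' (isBad S x) (not' (mem x b)))) l

def addV {α : Type} (S : Gs) (w d : Nat) (A : List Nat) (k : Gs → α) : α :=
  frc (head' (map' A fun a => (get S.vs a).c) S.n) fun c0 =>
  frc (Nat.add S.W (Nat.mul (Nat.sub w d) (Nat.pow 4 S.n))) fun W =>
  addL S.n A (map' A fun a => (get S.vs a).c) c0 ⟨w, d, A, c0⟩ S.vs 0 fun vs =>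
  k ⟨Nat.succ S.n, vs, W, newb ⟨Nat.succ S.n, vs, W, [], []⟩ (S.n :: A) S.b,
    Bool.rec S.h (S.n :: S.h) (Nat.ble 2 (Nat.sub w d))⟩

def add (thr : Nat) (st : St) (w d : Nat) (A : List Nat) (k : St → Bool) : Bool :=
  addV st.S w d A fun S =>
  ite' (wcok S)
    (frc (forb st.S.vs thr w d A st.S.n) fun F =>
     all' (split F (Nat.pow 2 st.S.n) st.G w (tgt A st.S.n) 0) fun G => k ⟨S, G⟩)
    true

def unsat (vs : List Vx) (i : Nat) : Bool := Nat.ble (Nat.succ (get vs i).nb.length) (get vs i).d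

def combos (S : Gs) : List (Nat × Nat) :=
  List.rec [(2,1),(2,2),(3,2),(3,1),(4,1),(4,2),(5,2)] (fun _ _ _ => [(2,1),(2,2),(3,2)]) S.h

def opts (S : Gs) (a : Nat) : List Nat :=
  filt' (rng S.n) fun b =>
    and' (unsat S.vs b) (not' (Nat.beq (get S.vs b).c (get S.vs a).c))

/-- first unsaturated vertex -/
def pick (vs : List Vx) : Nat → Option Nat :=
  List.rec (fun _ => none) (fun v _ ih i =>
    ite' (Nat.ble (Nat.succ v.nb.length) v.d) (some i) (ih (Nat.succ i))) vs

def search (thr : Nat) (acc : St → Bool) (fuel : Nat) : St → Bool :=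
  Nat.rec (fun _ => false) (fun _ ih st => or' (acc st)
    (Option.rec false (fun a => all' (combos st.S) fun wd =>
        and' (add thr st wd.1 wd.2 [a] ih)
        (or' (Nat.beq wd.2 1) (all' (opts st.S a) fun b =>
          add thr st wd.1 wd.2 [a, b] ih))) (pick st.S.vs 0))) fuel

def bt (M i : Nat) : Bool := not' (Nat.beq (Nat.land M (Nat.pow 2 i)) 0)

def shr (G : List Gr) (i j : Nat) : Nat :=
  List.rec 0 (fun g _ s => ite' (and' (bt g.M i) (bt g.M j)) (Nat.add g.m s) s) G

def tri (G : List Gr) (i j k : Nat) : Nat :=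
  List.rec 0 (fun g _ s => ite' (and' (bt g.M i) (and' (bt g.M j) (bt g.M k))) (Nat.add g.m s) s) G

def accN (st : St) : Bool :=
  or' (Nat.beq (shr st.G 0 1) 0)
  (and' (Nat.ble 1 (aw st.S 0)) (and' (Nat.ble 1 (aw st.S 1)) (and' (Nat.beq (shr st.G 0 1) 2)
    (any' (nb st.S 0) fun x => and' (mem x (nb st.S 1)) (Nat.beq (tri st.G 0 1 x) 1)))))

def accA (st : St) : Bool := Nat.beq (shr st.G 0 1) 1

def accD1 (st : St) (i : Nat) : Bool :=
  any' (nb st.S i) fun p => or' (Nat.beq (aw st.S p) 0) (any' (nb st.S i) fun q => and' (not' (Nat.beq p q))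
    (or' (not' (Nat.beq (shr st.G p q) 2)) (not' (Nat.beq (tri st.G p q i) 1))))

def accD (st : St) : Bool := or' (accD1 st 0) (accD1 st 1)

def kinds : List (Nat × Nat) := [(2,0),(3,0),(2,1),(3,1),(4,1),(2,2),(3,2),(4,2),(5,2)]

def gs1 (w d : Nat) : Gs :=
  ⟨1, [⟨w, d, [], 0⟩], Nat.sub w d, [], ite' (Nat.ble 2 (Nat.sub w d)) [0] []⟩

def st1 (w d : Nat) : St := ⟨gs1 w d, [⟨1, 1, w⟩]⟩

def heavy (p : Nat × Nat) : Bool := Nat.ble 2 (Nat.sub p.1 p.2)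

def start (thr : Nat) (acc : St → Bool) (A : List Nat) (flt : Nat × Nat → Nat × Nat → Bool) : Bool :=
  all' kinds fun p => all' kinds fun q =>
    or' (not' (flt p q)) (or' (and' (heavy p) (heavy q))
    (add thr (st1 p.1 p.2) q.1 q.2 A (search thr acc 12)))

def ord (p q : Nat × Nat) : Bool := Nat.ble (Nat.add (Nat.mul 8 q.1) q.2) (Nat.add (Nat.mul 8 p.1) p.2)

def fltN (thr : Nat) (p q : Nat × Nat) : Bool := and' (ord p q) (Nat.beq (code p.1 q.1) thr)

def fltA (p q : Nat × Nat) : Bool := and' (Nat.ble 1 p.2) (and' (Nat.ble 1 q.2) (ord p q))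

def fltD (p q : Nat × Nat) : Bool := and' (Nat.beq 2 p.2) (and' (Nat.beq 2 q.2) (ord p q))

def stageN (thr : Nat) : Bool := start thr accN [] (fltN thr)

def stageA : Bool := start 64 accA [0] fltA

def stageD : Bool := and' (start 64 accD [0] fltD) (start 64 accD [] fltD)

def stageC : Bool := search 0 (fun _ => false) 12 ⟨gs1 5 2, [⟨2, 1, 1⟩, ⟨1, 1, 1⟩]⟩

end

end Srch

namespace Srch

theorem ite'_eq {α : Type} (b : Bool) (x y : α) : ite' b x y = bif b then x else y := by cases b <;> rfl
theorem and'_eq (a b : Bool) : and' a b = (a && b) := by cases a <;> rfl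
theorem or'_eq (a b : Bool) : or' a b = (a || b) := by cases a <;> rfl
theorem not'_eq (a : Bool) : not' a = !a := by cases a <;> rfl
theorem frc_eq {α : Type} (x : Nat) (f : Nat → α) : frc x f = f x := by cases x <;> rfl

theorem any'_cons {α : Type} (a : α) (l : List α) (f : α → Bool) :
    any' (a :: l) f = (f a || any' l f) := by
  change @Bool.rec (fun _ => Bool) (any' l f) true (f a) = _
  cases f a <;> rfl
theorem any'_eq {α : Type} (l : List α) (f : α → Bool) : any' l f = l.any f := by
  induction l with
  | nil => rfl
  | cons a l ih => rw [any'_cons, ih, List.any_cons]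
theorem all'_cons {α : Type} (a : α) (l : List α) (f : α → Bool) :
    all' (a :: l) f = (f a && all' l f) := by
  change @Bool.rec (fun _ => Bool) false (all' l f) (f a) = _
  cases f a <;> rfl
theorem all'_eq {α : Type} (l : List α) (f : α → Bool) : all' l f = l.all f := by
  induction l with
  | nil => rfl
  | cons a l ih => rw [all'_cons, ih, List.all_cons]
theorem map'_eq {α β : Type} (l : List α) (f : α → β) : map' l f = l.map f := by
  induction l with
  | nil => rfl
  | cons a l ih => change f a :: map' l f = _; rw [ih, List.map_cons]
theorem app'_eq {α : Type} (l k : List α) : app' l k = l ++ k := by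
  induction l with
  | nil => rfl
  | cons a l ih => change a :: app' l k = _; rw [ih, List.cons_append]
theorem fmap'_eq {α β : Type} (l : List α) (f : α → List β) : fmap' l f = l.flatMap f := by
  induction l with
  | nil => rfl
  | cons a l ih => change app' (f a) (fmap' l f) = _; rw [ih, app'_eq, List.flatMap_cons]
theorem filt'_eq {α : Type} (l : List α) (f : α → Bool) : filt' l f = l.filter f := by
  induction l with
  | nil => rfl
  | cons a l ih =>
    change @Bool.rec (fun _ => List α) (filt' l f) (a :: filt' l f) (f a) = _
    rw [ih]
    cases h : f a <;> simp [h]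
theorem mem_iff (i : Nat) (l : List Nat) : mem i l = true ↔ i ∈ l := by
  unfold mem; rw [any'_eq, List.any_eq_true]
  constructor
  · rintro ⟨x, hx, h⟩; have := Nat.eq_of_beq_eq_true h; subst this; exact hx
  · intro h; exact ⟨i, h, Nat.beq_refl i⟩
theorem mem_false (i : Nat) (l : List Nat) : mem i l = false ↔ i ∉ l := by
  rw [← mem_iff]; simp
theorem any'_iff {α : Type} (l : List α) (f : α → Bool) :
    any' l f = true ↔ ∃ x ∈ l, f x = true := by rw [any'_eq, List.any_eq_true]
theorem all'_iff {α : Type} (l : List α) (f : α → Bool) :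
    all' l f = true ↔ ∀ x ∈ l, f x = true := by rw [all'_eq, List.all_eq_true]
theorem and'_iff (a b : Bool) : and' a b = true ↔ a = true ∧ b = true := by cases a <;> cases b <;> decide
theorem or'_iff (a b : Bool) : or' a b = true ↔ a = true ∨ b = true := by cases a <;> cases b <;> decide
theorem not'_iff (a : Bool) : not' a = true ↔ ¬ a = true := by cases a <;> decide
theorem beq_iff (a b : Nat) : Nat.beq a b = true ↔ a = b :=
  ⟨Nat.eq_of_beq_eq_true, fun h => h ▸ Nat.beq_refl a⟩
theorem ble_iff (a b : Nat) : Nat.ble a b = true ↔ a ≤ b :=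
  ⟨Nat.le_of_ble_eq_true, Nat.ble_eq_true_of_le⟩
theorem ite'_iff (b : Bool) (x y : Bool) :
    ite' b x y = true ↔ (b = true → x = true) ∧ (b = false → y = true) := by
  cases b <;> cases x <;> cases y <;> decide

section groups
variable {N : ℕ}

def GR (q μ : Fin N → ℕ) : List Gr → Finset (Fin N) → Prop
  | [], U => U = ∅
  | g :: G, U => ∃ K ⊆ U, K.card = g.m ∧ (∀ k ∈ K, q k = g.P ∧ μ k = g.M) ∧ GR q μ G (U \ K)

theorem cons0_eq (P M m : Nat) (L : List Gr) : cons0 P M m L = if m = 0 then L else ⟨P, M, m⟩ :: L := by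
  cases m with
  | zero => rfl
  | succ k => simp [cons0, frc_eq]

theorem GR_cons0 {q μ : Fin N → ℕ} {P M m : ℕ} {L : List Gr} {U K : Finset (Fin N)}
    (hK : K ⊆ U) (hm : K.card = m) (h : ∀ k ∈ K, q k = P ∧ μ k = M) (hL : GR q μ L (U \ K)) :
    GR q μ (cons0 P M m L) U := by
  rw [cons0_eq]
  split_ifs with h0
  · rw [h0, Finset.card_eq_zero] at hm
    simpa [hm] using hL
  · exact ⟨K, hK, hm, h, hL⟩

theorem GR_bnd {q μ : Fin N → ℕ} {F : ℕ} : ∀ {G : List Gr} {U : Finset (Fin N)}, GR q μ G U →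
    ∀ k ∈ U, blocked F (μ k) = false → q k ≤ bnd F G
  | [], U, h, k, hk, _ => by rw [show U = ∅ from h] at hk; simp at hk
  | g :: G, U, ⟨K, hK, hm, hq, hG⟩, k, hk, hb => by
    have e : bnd F (g :: G) = ite' (blocked F g.M) (bnd F G) (ite' (Nat.ble g.P (bnd F G)) (bnd F G) g.P) := rfl
    rw [e, ite'_eq, ite'_eq]
    have hle : Nat.ble g.P (bnd F G) = decide (g.P ≤ bnd F G) := by
      rw [Bool.eq_iff_iff, ble_iff]; simp
    rw [hle]
    by_cases hkK : k ∈ K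
    · obtain ⟨h1, h2⟩ := hq k hkK
      rw [h2] at hb
      simp only [hb, h1, cond_false]
      by_cases h3 : g.P ≤ bnd F G <;> simp [h3]
    · have := GR_bnd hG k (by simp [hk, hkK]) hb
      cases blocked F g.M
      · by_cases h3 : g.P ≤ bnd F G <;> simp [h3] <;> omega
      · simpa using this

theorem mem_pairs (c a b : ℕ) (h : a + b ≤ c) : (a, b) ∈ pairs c := by
  have hG : (a, b) ∈ pairsG c := by
    simp only [pairsG, List.mem_flatMap, List.mem_range, List.mem_map]
    exact ⟨a, by omega, b, by omega, rfl⟩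
  rcases c with _ | _ | _ | c
  · obtain ⟨rfl, rfl⟩ : a = 0 ∧ b = 0 := by omega
    decide
  · have : a ≤ 1 := by omega
    have : b ≤ 1 := by omega
    interval_cases a <;> interval_cases b <;> first | omega | decide
  · have : a ≤ 2 := by omega
    have : b ≤ 2 := by omega
    interval_cases a <;> interval_cases b <;> first | omega | decide
  · exact hG

theorem natAbs_pos {Q t : ℤ} (h : Q.sign * t = 1) : (16 * Q + t).natAbs = 16 * Q.natAbs + 1 := by
  rcases lt_trichotomy Q 0 with h0 | h0 | h0
  · rw [Int.sign_eq_neg_one_of_neg h0] at h; omega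
  · subst h0; simp at h
  · rw [Int.sign_eq_one_of_pos h0] at h; omega
theorem natAbs_neg {Q t : ℤ} (h : Q.sign * t = -1) : (16 * Q + t).natAbs = 16 * Q.natAbs - 1 := by
  rcases lt_trichotomy Q 0 with h0 | h0 | h0
  · rw [Int.sign_eq_neg_one_of_neg h0] at h; omega
  · subst h0; simp at h
  · rw [Int.sign_eq_one_of_pos h0] at h; omega

theorem split_sound (Q t : Fin N → ℤ) (μ : Fin N → ℕ) (F bit : ℕ) (Fr : Finset (Fin N))
    (ht : ∀ k, t k = 0 ∨ t k = 1 ∨ t k = -1)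
    (hFr : ∀ k ∈ Fr, (16 * Q k + t k).natAbs = 1 ∧ (if t k = 0 then μ k else μ k ||| bit) = bit) :
    ∀ (G : List Gr) (U : Finset (Fin N)), GR (fun k => (Q k).natAbs) μ G U →
    Disjoint U Fr → (∀ k ∈ U, Q k ≠ 0) →
    (∀ k ∈ U, blocked F (μ k) = true → t k = 0) → ∀ w x y : ℕ,
    w = (U.filter fun k => t k ≠ 0).card + Fr.card →
    (x : ℤ) + ∑ k ∈ U, t k * Q k = y →
    ∃ G' ∈ split F bit G w x y,
      GR (fun k => (16 * Q k + t k).natAbs) (fun k => if t k = 0 then μ k else μ k ||| bit) G' (U ∪ Fr)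
  | [], U, h, hd, hQ, hb, w, x, y, hw, hx => by
    have h : U = ∅ := h
    subst h
    have e : split F bit [] w x y = ite' (Nat.beq x y) [cons0 1 bit w []] [] := rfl
    have : x = y := by simpa using hx
    rw [e, (beq_iff _ _).2 this]
    refine ⟨cons0 1 bit w [], by simp [ite'_eq], ?_⟩
    rw [Finset.empty_union]
    exact GR_cons0 (K := Fr) subset_rfl (by simpa using hw.symm) hFr (by simp [GR])
  | g :: G, U, hGR, hd, hQ, hb, w, x, y, hw, hx => by
    have hbnd := GR_bnd (F := F) hGR
    obtain ⟨K, hK, hm, hq, hG⟩ := hGR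
    have habs : |∑ k ∈ U, t k * Q k| ≤ w * bnd F (g :: G) := by
      calc |∑ k ∈ U, t k * Q k| ≤ ∑ k ∈ U, |t k * Q k| := Finset.abs_sum_le_sum_abs _ _
        _ = ∑ k ∈ U.filter (fun k => t k ≠ 0), |t k * Q k| := by
            rw [Finset.sum_filter]; refine Finset.sum_congr rfl fun k _ => ?_
            split_ifs with h
            · rfl
            · push Not at h; simp [h]
        _ ≤ ∑ k ∈ U.filter (fun k => t k ≠ 0), (bnd F (g :: G) : ℤ) := by
            refine Finset.sum_le_sum fun k hk => ?_
            rw [Finset.mem_filter] at hk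
            have h1 : |t k| = 1 := by rcases ht k with h | h | h <;> [exact absurd h hk.2; simp [h]; simp [h]]
            rw [abs_mul, h1, one_mul, Int.abs_eq_natAbs]
            have := hbnd k hk.1 (by
              cases h : blocked F (μ k); rfl; exact absurd (hb k hk.1 h) hk.2)
            exact_mod_cast this
        _ = ((U.filter (fun k => t k ≠ 0)).card : ℤ) * bnd F (g :: G) := by simp
        _ ≤ w * bnd F (g :: G) := by
            gcongr; rw [hw]; omega
    have hnear : near w (bnd F (g :: G)) x y = true := by
      unfold near
      rw [and'_iff, ble_iff, ble_iff]
      change x ≤ y + w * bnd F (g :: G) ∧ y ≤ x + w * bnd F (g :: G)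
      rw [abs_le] at habs
      zify; constructor <;> linarith [habs.1, habs.2]
    have e : split F bit (g :: G) w x y = ite' (near w (bnd F (g :: G)) x y)
      (ite' (blocked F g.M) (map' (split F bit G w x y) (cons0 (Nat.mul 16 g.P) g.M g.m))
        (fmap' (pairs (ite' (Nat.ble w g.m) w g.m)) fun ab =>
          map' (split F bit G (Nat.sub w (Nat.add ab.1 ab.2)) (Nat.add x (Nat.mul ab.1 g.P))
              (Nat.add y (Nat.mul ab.2 g.P)))
            (mk g.P g.M g.m bit ab.1 ab.2)))
      [] := rfl
    rw [e, hnear, ite'_eq, cond_true]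
    have hUK : ∀ k ∈ U \ K, k ∈ U := fun k hk => (Finset.mem_sdiff.1 hk).1
    have hdj : Disjoint (U \ K) Fr := hd.mono_left Finset.sdiff_subset
    have hsum : ∑ k ∈ U, t k * Q k = ∑ k ∈ U \ K, t k * Q k + ∑ k ∈ K, t k * Q k :=
      (Finset.sum_sdiff hK).symm
    have hcard : (U.filter fun k => t k ≠ 0).card =
        ((U \ K).filter fun k => t k ≠ 0).card + (K.filter fun k => t k ≠ 0).card := by
      rw [← Finset.card_union_of_disjoint, ← Finset.filter_union, Finset.sdiff_union_of_subset hK]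
      exact Finset.disjoint_filter_filter Finset.sdiff_disjoint
    have hUF : (U ∪ Fr) \ K = (U \ K) ∪ Fr := by
      ext k; simp only [Finset.mem_sdiff, Finset.mem_union]
      constructor
      · tauto
      · rintro (h | h)
        · tauto
        · exact ⟨Or.inr h, fun hk => Finset.disjoint_left.1 hd (hK hk) h⟩
    cases hbl : blocked F g.M with
    | true =>
      have ht0 : ∀ k ∈ K, t k = 0 := fun k hk => hb k (hK hk) (by rw [(hq k hk).2]; exact hbl)
      have hs0 : ∑ k ∈ K, t k * Q k = 0 := Finset.sum_eq_zero fun k hk => by rw [ht0 k hk, zero_mul]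
      have hc0 : (K.filter fun k => t k ≠ 0).card = 0 := by
        rw [Finset.card_eq_zero, Finset.filter_eq_empty_iff]; intro k hk; simp [ht0 k hk]
      obtain ⟨G', hG', hR⟩ := split_sound Q t μ F bit Fr ht hFr G (U \ K) hG hdj
        (fun k hk => hQ k (hUK k hk)) (fun k hk => hb k (hUK k hk)) w x y (by omega)
        (by rw [hsum, hs0] at hx; simpa using hx)
      refine ⟨cons0 (Nat.mul 16 g.P) g.M g.m G', ?_, ?_⟩
      · rw [ite'_eq, cond_true, map'_eq]; exact List.mem_map.2 ⟨G', hG', rfl⟩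
      · refine GR_cons0 (K := K) (hK.trans Finset.subset_union_left) hm ?_ (by rwa [hUF])
        intro k hk
        simp only [ht0 k hk, if_true, (hq k hk).2, and_true]
        have := (hq k hk).1; change _ = 16 * g.P; dsimp only at this; omega
    | false =>
      set a := (K.filter fun k => (Q k).sign * t k = 1) with ha
      set b := (K.filter fun k => (Q k).sign * t k = -1) with hb'
      have hsg : ∀ k ∈ K, (Q k).sign = 1 ∨ (Q k).sign = -1 := fun k hk => by
        rcases lt_or_gt_of_ne (hQ k (hK hk)) with h | h
        · exact Or.inr (Int.sign_eq_neg_one_of_neg h)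
        · exact Or.inl (Int.sign_eq_one_of_pos h)
      have hab : Disjoint a b := by
        rw [Finset.disjoint_left]; intro k h1 h2; rw [ha, Finset.mem_filter] at h1; rw [hb', Finset.mem_filter] at h2; omega
      have hun : (K.filter fun k => t k ≠ 0) = a ∪ b := by
        ext k; simp only [ha, hb', Finset.mem_filter, Finset.mem_union]
        constructor
        · rintro ⟨hk, h⟩
          rcases hsg k hk with hs | hs <;> rcases ht k with h' | h' | h' <;> simp [hk, hs, h'] at h ⊢
        · rintro (⟨hk, h⟩ | ⟨hk, h⟩)
          · exact ⟨hk, fun h0 => by simp [h0] at h⟩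
          · exact ⟨hk, fun h0 => by simp [h0] at h⟩
      have hcab : (K.filter fun k => t k ≠ 0).card = a.card + b.card := by
        rw [hun, Finset.card_union_of_disjoint hab]
      have hcK : a.card + b.card ≤ g.m := by rw [← hcab, ← hm]; exact Finset.card_filter_le _ _
      have hsK : ∑ k ∈ K, t k * Q k = a.card * g.P - b.card * g.P := by
        have h1 : ∑ k ∈ K, t k * Q k = ∑ k ∈ K.filter (fun k => t k ≠ 0), t k * Q k := by
          rw [Finset.sum_filter]; refine Finset.sum_congr rfl fun k _ => ?_
          split_ifs with h
          · rfl
          · push Not at h; simp [h]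
        have h2 : ∀ k ∈ K, t k * Q k = ((Q k).sign * t k) * g.P := fun k hk => by
          rw [← (hq k hk).1]
          conv_lhs => rw [← Int.sign_mul_natAbs (Q k)]
          ring
        rw [h1, hun, Finset.sum_union hab, sub_eq_add_neg]
        congr 1
        · rw [Finset.sum_congr rfl (g := fun _ => (g.P : ℤ))]
          · simp
          · intro k hk; rw [ha, Finset.mem_filter] at hk; rw [h2 k hk.1, hk.2, one_mul]
        · rw [Finset.sum_congr rfl (g := fun _ => -(g.P : ℤ))]
          · simp
          · intro k hk; rw [hb', Finset.mem_filter] at hk; rw [h2 k hk.1, hk.2, neg_one_mul]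
      obtain ⟨G', hG', hR⟩ := split_sound Q t μ F bit Fr ht hFr G (U \ K) hG hdj
        (fun k hk => hQ k (hUK k hk)) (fun k hk => hb k (hUK k hk))
        (w - (a.card + b.card)) (x + a.card * g.P) (y + b.card * g.P) (by omega)
        (by push_cast; rw [hsum, hsK] at hx; linarith)
      refine ⟨mk g.P g.M g.m bit a.card b.card G', ?_, ?_⟩
      · rw [ite'_eq, cond_false, fmap'_eq]
        refine List.mem_flatMap.2 ⟨(a.card, b.card), ?_, ?_⟩
        · apply mem_pairs
          rw [ite'_eq]
          cases Nat.ble w g.m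
          · exact hcK
          · simp only [cond_true]; omega
        · rw [map'_eq]; exact List.mem_map.2 ⟨G', hG', rfl⟩
      · have haK : a ⊆ K := Finset.filter_subset _ _
        have hbK : b ⊆ K := Finset.filter_subset _ _
        unfold mk
        refine GR_cons0 (K := a) (haK.trans (hK.trans Finset.subset_union_left)) rfl ?_ ?_
        · intro k hk
          have hkK := haK hk
          rw [ha, Finset.mem_filter] at hk
          have : t k ≠ 0 := fun h => by simp [h] at hk
          simp only [this, if_false, (hq k hkK).2]
          refine ⟨?_, rfl⟩
          rw [natAbs_pos hk.2]; change _ = 16 * g.P + 1; rw [← (hq k hkK).1]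
        refine GR_cons0 (K := (K \ a) \ b) ?_ ?_ ?_ ?_
        · intro k hk; simp only [Finset.mem_sdiff, Finset.mem_union] at hk ⊢
          exact ⟨Or.inl (hK hk.1.1), hk.1.2⟩
        · rw [Finset.card_sdiff_of_subset, Finset.card_sdiff_of_subset haK, hm]
          · change _ = g.m - (a.card + b.card); omega
          · intro k hk; rw [Finset.mem_sdiff]; exact ⟨hbK hk, fun h => Finset.disjoint_left.1 hab h hk⟩
        · intro k hk
          simp only [Finset.mem_sdiff] at hk
          have h0 : t k = 0 := by
            by_contra h
            have : k ∈ a ∪ b := by rw [← hun, Finset.mem_filter]; exact ⟨hk.1.1, h⟩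
            rw [Finset.mem_union] at this; tauto
          simp only [h0, if_true, (hq k hk.1.1).2, and_true]
          have := (hq k hk.1.1).1; change _ = 16 * g.P; dsimp only at this; omega
        refine GR_cons0 (K := b) ?_ rfl ?_ ?_
        · intro k hk; simp only [Finset.mem_sdiff, Finset.mem_union]
          exact ⟨⟨Or.inl (hK (hbK hk)), fun h => Finset.disjoint_left.1 hab h hk⟩, fun h => h.2 hk⟩
        · intro k hk
          have hkK := hbK hk
          rw [hb', Finset.mem_filter] at hk
          have : t k ≠ 0 := fun h => by simp [h] at hk
          simp only [this, if_false, (hq k hkK).2]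
          refine ⟨?_, rfl⟩
          rw [natAbs_neg hk.2]; change _ = 16 * g.P - 1; rw [← (hq k hkK).1]
        · convert hR using 1
          rw [← hUF]
          ext k; simp only [Finset.mem_sdiff]
          have := @haK k; have := @hbK k
          tauto

theorem GR_shr {q μ : Fin N → ℕ} (i j : ℕ) : ∀ {G : List Gr} {U : Finset (Fin N)}, GR q μ G U →
    shr G i j = (U.filter fun k => bt (μ k) i = true ∧ bt (μ k) j = true).card
  | [], U, h => by rw [show U = ∅ from h]; rfl
  | g :: G, U, ⟨K, hK, hm, hq, hG⟩ => by
    have e : shr (g :: G) i j = ite' (and' (bt g.M i) (bt g.M j)) (Nat.add g.m (shr G i j)) (shr G i j) := rfl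
    rw [e, GR_shr i j hG, ite'_eq, and'_eq, ← hm]
    have hcard : (U.filter fun k => bt (μ k) i = true ∧ bt (μ k) j = true).card =
        ((U \ K).filter fun k => bt (μ k) i = true ∧ bt (μ k) j = true).card + (K.filter fun k => bt (μ k) i = true ∧ bt (μ k) j = true).card := by
      rw [← Finset.card_union_of_disjoint, ← Finset.filter_union, Finset.sdiff_union_of_subset hK]
      exact Finset.disjoint_filter_filter Finset.sdiff_disjoint
    have h2 : K.filter (fun k => bt (μ k) i = true ∧ bt (μ k) j = true) = if bt g.M i = true ∧ bt g.M j = true then K else ∅ := by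
      ext k; split_ifs with h <;> simp only [Finset.mem_filter, Finset.notMem_empty, iff_false]
      · exact ⟨fun h => h.1, fun hk => ⟨hk, by rwa [(hq k hk).2]⟩⟩
      · rintro ⟨hk, h'⟩; rw [(hq k hk).2] at h'; exact h h'
    rw [hcard, h2]
    cases bt g.M i <;> cases bt g.M j <;> simp [Nat.add_comm]

theorem GR_tri {q μ : Fin N → ℕ} (i j l : ℕ) : ∀ {G : List Gr} {U : Finset (Fin N)}, GR q μ G U →
    tri G i j l = (U.filter fun k => bt (μ k) i = true ∧ bt (μ k) j = true ∧ bt (μ k) l = true).card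
  | [], U, h => by rw [show U = ∅ from h]; rfl
  | g :: G, U, ⟨K, hK, hm, hq, hG⟩ => by
    have e : tri (g :: G) i j l = ite' (and' (bt g.M i) (and' (bt g.M j) (bt g.M l)))
      (Nat.add g.m (tri G i j l)) (tri G i j l) := rfl
    rw [e, GR_tri i j l hG, ite'_eq, and'_eq, and'_eq, ← hm]
    have hcard : (U.filter fun k => bt (μ k) i = true ∧ bt (μ k) j = true ∧ bt (μ k) l = true).card =
        ((U \ K).filter fun k => bt (μ k) i = true ∧ bt (μ k) j = true ∧ bt (μ k) l = true).card + (K.filter fun k => bt (μ k) i = true ∧ bt (μ k) j = true ∧ bt (μ k) l = true).card := by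
      rw [← Finset.card_union_of_disjoint, ← Finset.filter_union, Finset.sdiff_union_of_subset hK]
      exact Finset.disjoint_filter_filter Finset.sdiff_disjoint
    have h2 : K.filter (fun k => bt (μ k) i = true ∧ bt (μ k) j = true ∧ bt (μ k) l = true) = if bt g.M i = true ∧ bt g.M j = true ∧ bt g.M l = true then K else ∅ := by
      ext k; split_ifs with h <;> simp only [Finset.mem_filter, Finset.notMem_empty, iff_false]
      · exact ⟨fun h => h.1, fun hk => ⟨hk, by rwa [(hq k hk).2]⟩⟩
      · rintro ⟨hk, h'⟩; rw [(hq k hk).2] at h'; exact h h'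
    rw [hcard, h2]
    cases bt g.M i <;> cases bt g.M j <;> cases bt g.M l <;> simp [Nat.add_comm]

end groups

theorem deg_two {C : Config} (hl : C.IsLinear) {x a b z : C.V} (hab : a ≠ b)
    (ha : C.graph.Adj x a) (hb : C.graph.Adj x b) (hz : C.graph.Adj x z) : z = a ∨ z = b := by
  by_contra hne
  push Not at hne
  have h1 := hl.1 x
  unfold Config.deg at h1
  have hsub : ({a, b, z} : Set C.V) ⊆ C.graph.neighborSet x := by
    rintro y (rfl | rfl | rfl) <;> assumption
  have h2 := Set.ncard_le_ncard hsub (Set.toFinite _)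
  have h3 : ({a, b, z} : Set C.V).ncard = 3 := by
    rw [Set.ncard_eq_three]; exact ⟨a, b, z, hab, hne.1.symm, hne.2.symm, rfl⟩
  omega

structure BadFacts (C : Config) : Prop where
  F1 : ∀ x y : C.V, C.IsBad x → C.IsBad y → x ≠ y → C.graph.Adj x y ∨ ∃ z, C.graph.Adj x z ∧ C.graph.Adj y z
  F3 : ∀ x : C.V, C.IsBad x → C.adjw x ≠ 3
  F4 : ∀ x y z : C.V, C.IsBad x → C.IsBad y → C.IsBad z → x ≠ y → x ≠ z → y ≠ z → C.adjw x = 1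
  F5 : ∀ x y z : C.V, C.IsBad x → C.IsBad y → x ≠ y → C.graph.Adj x z → C.adjw z ≠ 3
  F6 : ∀ x y z : C.V, C.IsBad x → C.IsBad y → x ≠ y → C.graph.Adj x z → C.graph.Adj y z → C.adjw z = 1

theorem bf1 {C : Config} (v : ℕ → C.V)
    (hb : ∀ x, C.IsBad x ↔ x = v 1) (h3 : C.adjw (v 1) ≠ 3) : BadFacts C := by
  constructor
  · intro x y hx hy; rw [hb] at hx hy; subst hx; subst hy; simp
  · intro x hx; rw [hb] at hx; subst hx; exact h3
  · intro x y z hx hy; rw [hb] at hx hy; subst hx; subst hy; simp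
  · intro x y z hx hy; rw [hb] at hx hy; subst hx; subst hy; simp
  · intro x y z hx hy; rw [hb] at hx hy; subst hx; subst hy; simp

theorem bf2 {C : Config} (hl : C.IsLinear) (v : ℕ → C.V)
    (hb : ∀ x, C.IsBad x ↔ x = v 1 ∨ x = v 3)
    (h01 : C.graph.Adj (v 0) (v 1)) (h12 : C.graph.Adj (v 1) (v 2))
    (h23 : C.graph.Adj (v 2) (v 3)) (h34 : C.graph.Adj (v 3) (v 4))
    (n02 : v 0 ≠ v 2) (n24 : v 2 ≠ v 4) (n04 : v 0 ≠ v 4)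
    (a0 : C.adjw (v 0) ≠ 3) (a1 : C.adjw (v 1) ≠ 3) (a2 : C.adjw (v 2) = 1) (a3 : C.adjw (v 3) ≠ 3)
    (a4 : C.adjw (v 4) ≠ 3) : BadFacts C := by
  have n1 : ∀ z, C.graph.Adj (v 1) z → z = v 0 ∨ z = v 2 := fun z hz => deg_two hl n02 h01.symm h12 hz
  have n3 : ∀ z, C.graph.Adj (v 3) z → z = v 2 ∨ z = v 4 := fun z hz => deg_two hl n24 h23.symm h34 hz
  constructor
  · intro x y hx hy hne; rw [hb] at hx hy
    rcases hx with rfl | rfl <;> rcases hy with rfl | rfl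
    · exact absurd rfl hne
    · exact Or.inr ⟨v 2, h12, h23.symm⟩
    · exact Or.inr ⟨v 2, h23.symm, h12⟩
    · exact absurd rfl hne
  · intro x hx; rw [hb] at hx
    rcases hx with rfl | rfl <;> assumption
  · intro x y z hx hy hz h1 h2 h3; rw [hb] at hx hy hz
    rcases hx with rfl | rfl <;> rcases hy with rfl | rfl <;> rcases hz with rfl | rfl <;> simp at h1 h2 h3
  · intro x y z hx hy hne hz; rw [hb] at hx
    rcases hx with rfl | rfl
    · rcases n1 z hz with rfl | rfl
      · exact a0
      · rw [a2]; decide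
    · rcases n3 z hz with rfl | rfl
      · rw [a2]; decide
      · exact a4
  · intro x y z hx hy hne hz hz'; rw [hb] at hx hy
    rcases hx with rfl | rfl <;> rcases hy with rfl | rfl
    · exact absurd rfl hne
    · rcases n1 z hz with rfl | rfl <;> rcases n3 _ hz' with h | h <;> first | exact a2 | exact absurd h n02 | exact absurd h n04
    · rcases n1 z hz' with rfl | rfl <;> rcases n3 _ hz with h | h <;> first | exact a2 | exact absurd h n02 | exact absurd h n04
    · exact absurd rfl hne

theorem no_tri {C : Config} (hl : C.IsLinear) {x y z : C.V} (h1 : C.graph.Adj x y)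
    (h2 : C.graph.Adj y z) (h3 : C.graph.Adj x z) : False := by
  have hb := (SimpleGraph.isAcyclic_iff_forall_adj_isBridge.1 hl.2) h1
  rw [SimpleGraph.isBridge_iff] at hb
  refine hb ?_
  have e1 : (C.graph.deleteEdges {s(x, y)}).Adj x z := by
    rw [SimpleGraph.deleteEdges_adj]
    refine ⟨h3, ?_⟩
    simp [h2.ne.symm, h3.ne, h1.ne]
  have e2 : (C.graph.deleteEdges {s(x, y)}).Adj z y := by
    rw [SimpleGraph.deleteEdges_adj]
    refine ⟨h2.symm, ?_⟩
    simp [h2.ne.symm, h3.ne.symm]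
  exact e1.reachable.trans e2.reachable

theorem bf3 {C : Config} (hl : C.IsLinear) (v : ℕ → C.V)
    (hb : ∀ x, C.IsBad x ↔ x = v 1 ∨ x = v 2)
    (h01 : C.graph.Adj (v 0) (v 1)) (h12 : C.graph.Adj (v 1) (v 2))
    (h23 : C.graph.Adj (v 2) (v 3)) 
    (n02 : v 0 ≠ v 2) (n13 : v 1 ≠ v 3)
    (a0 : C.adjw (v 0) ≠ 3) (a1 : C.adjw (v 1) ≠ 3) (a2 : C.adjw (v 2) ≠ 3) (a3 : C.adjw (v 3) ≠ 3) : BadFacts C := by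
  have n1 : ∀ z, C.graph.Adj (v 1) z → z = v 0 ∨ z = v 2 := fun z hz => deg_two hl n02 h01.symm h12 hz
  have n2 : ∀ z, C.graph.Adj (v 2) z → z = v 1 ∨ z = v 3 := fun z hz => deg_two hl n13 h12.symm h23 hz
  constructor
  · intro x y hx hy hne; rw [hb] at hx hy
    rcases hx with rfl | rfl <;> rcases hy with rfl | rfl
    · exact absurd rfl hne
    · exact Or.inl h12
    · exact Or.inl h12.symm
    · exact absurd rfl hne
  · intro x hx; rw [hb] at hx
    rcases hx with rfl | rfl <;> assumption
  · intro x y z hx hy hz h1 h2 h3; rw [hb] at hx hy hz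
    rcases hx with rfl | rfl <;> rcases hy with rfl | rfl <;> rcases hz with rfl | rfl <;> simp at h1 h2 h3
  · intro x y z hx hy hne hz; rw [hb] at hx
    rcases hx with rfl | rfl
    · rcases n1 z hz with rfl | rfl <;> assumption
    · rcases n2 z hz with rfl | rfl <;> assumption
  · intro x y z hx hy hne hz hz'; rw [hb] at hx hy
    exfalso
    rcases hx with rfl | rfl <;> rcases hy with rfl | rfl
    · exact absurd rfl hne
    · exact no_tri hl h12 hz' hz
    · exact no_tri hl h12 hz hz'
    · exact absurd rfl hne

theorem bf4 {C : Config} (hl : C.IsLinear) (v : ℕ → C.V)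
    (hb : ∀ x, C.IsBad x ↔ x = v 1 ∨ x = v 2 ∨ x = v 3)
    (h01 : C.graph.Adj (v 0) (v 1)) (h12 : C.graph.Adj (v 1) (v 2))
    (h23 : C.graph.Adj (v 2) (v 3)) (h34 : C.graph.Adj (v 3) (v 4))
    (n02 : v 0 ≠ v 2) (n13 : v 1 ≠ v 3) (n24 : v 2 ≠ v 4)
    (a0 : C.adjw (v 0) = 1) (a1 : C.adjw (v 1) = 1) (a2 : C.adjw (v 2) = 1) (a3 : C.adjw (v 3) = 1) 
    (a4 : C.adjw (v 4) = 1) : BadFacts C := by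
  have n1 : ∀ z, C.graph.Adj (v 1) z → z = v 0 ∨ z = v 2 := fun z hz => deg_two hl n02 h01.symm h12 hz
  have n2 : ∀ z, C.graph.Adj (v 2) z → z = v 1 ∨ z = v 3 := fun z hz => deg_two hl n13 h12.symm h23 hz
  have n3 : ∀ z, C.graph.Adj (v 3) z → z = v 2 ∨ z = v 4 := fun z hz => deg_two hl n24 h23.symm h34 hz
  have key : ∀ x z, C.IsBad x → C.graph.Adj x z → C.adjw z = 1 := by
    intro x z hx hz; rw [hb] at hx
    rcases hx with rfl | rfl | rfl
    · rcases n1 z hz with rfl | rfl <;> assumption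
    · rcases n2 z hz with rfl | rfl <;> assumption
    · rcases n3 z hz with rfl | rfl <;> assumption
  have key2 : ∀ x, C.IsBad x → C.adjw x = 1 := by
    intro x hx; rw [hb] at hx
    rcases hx with rfl | rfl | rfl <;> assumption
  constructor
  · intro x y hx hy hne; rw [hb] at hx hy
    rcases hx with rfl | rfl | rfl <;> rcases hy with rfl | rfl | rfl
    · exact absurd rfl hne
    · exact Or.inl h12
    · exact Or.inr ⟨v 2, h12, h23.symm⟩
    · exact Or.inl h12.symm
    · exact absurd rfl hne
    · exact Or.inl h23
    · exact Or.inr ⟨v 2, h23.symm, h12⟩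
    · exact Or.inl h23.symm
    · exact absurd rfl hne
  · intro x hx; rw [key2 x hx]; decide
  · intro x y z hx _ _ _ _ _; exact key2 x hx
  · intro x y z hx hy hne hz; rw [key x z hx hz]; decide
  · intro x y z hx hy hne hz hz'; exact key x z hx hz

theorem badFacts {C : Config} (hl : C.IsLinear) (hwc : C.WorkingConditions)
    (hbad : ∃ x : C.V, C.IsBad x) : BadFacts C := by
  obtain ⟨p, hp, m, v, ⟨hinj, hadj⟩, hm, haw, hb⟩ := hwc.2.2.2.2.2.2.2 hbad
  simp only [badPatterns, List.mem_cons, List.not_mem_nil, or_false] at hp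
  rcases hp with rfl | rfl | rfl | rfl | rfl | rfl | rfl | rfl | rfl | rfl | rfl | rfl | rfl <;>
    simp only [List.length_cons, List.length_nil] at hm <;>
    obtain rfl : m = _ := (Nat.succ_injective hm) <;>
    simp [Fin.forall_fin_succ, Fin.exists_fin_succ] at haw hb <;>
    simp only [eq_comm (a := v _)] at hb
  iterate 6
    refine bf1 v hb ?_
    simp [haw]
  iterate 4
    refine bf2 hl v hb (hadj 0 (by omega)) (hadj 1 (by omega)) (hadj 2 (by omega)) (hadj 3 (by omega))
      (fun h => ?_) (fun h => ?_) (fun h => ?_) (by simp [haw]) (by simp [haw]) (by simp [haw]) (by simp [haw]) (by simp [haw])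
    · have := hinj _ (by omega) _ (by omega) h; omega
    · have := hinj _ (by omega) _ (by omega) h; omega
    · have := hinj _ (by omega) _ (by omega) h; omega
  · refine bf3 hl v hb (hadj 0 (by omega)) (hadj 1 (by omega)) (hadj 2 (by omega)) 
      (fun h => ?_) (fun h => ?_) (by simp [haw]) (by simp [haw]) (by simp [haw]) (by simp [haw])
    · have := hinj _ (by omega) _ (by omega) h; omega
    · have := hinj _ (by omega) _ (by omega) h; omega
  · refine bf4 hl v hb (hadj 0 (by omega)) (hadj 1 (by omega)) (hadj 2 (by omega)) (hadj 3 (by omega))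
      (fun h => ?_) (fun h => ?_) (fun h => ?_) (by simp [haw]) (by simp [haw]) (by simp [haw]) (by simp [haw]) (by simp [haw])
    · have := hinj _ (by omega) _ (by omega) h; omega
    · have := hinj _ (by omega) _ (by omega) h; omega
    · have := hinj _ (by omega) _ (by omega) h; omega
  · refine bf3 hl v hb (hadj 0 (by omega)) (hadj 1 (by omega)) (hadj 2 (by omega)) 
      (fun h => ?_) (fun h => ?_) (by simp [haw]) (by simp [haw]) (by simp [haw]) (by simp [haw])
    · have := hinj _ (by omega) _ (by omega) h; omega
    · have := hinj _ (by omega) _ (by omega) h; omega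

theorem get_zero (v : Vx) (vs : List Vx) : get (v :: vs) 0 = v := rfl
theorem get_succ (v : Vx) (vs : List Vx) (i : ℕ) : get (v :: vs) (i + 1) = get vs i := rfl

def updV (n : ℕ) (A cs : List ℕ) (c0 : ℕ) (i : ℕ) (v : Vx) : Vx :=
  ⟨v.w, v.d, if i ∈ A then n :: v.nb else v.nb, if v.c ∈ cs then c0 else v.c⟩

def updL (n : ℕ) (A cs : List ℕ) (c0 : ℕ) : List Vx → ℕ → List Vx
  | [], _ => []
  | v :: vs, i => updV n A cs c0 i v :: updL n A cs c0 vs (i + 1)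

theorem updL_length (n : ℕ) (A cs : List ℕ) (c0 : ℕ) (vs : List Vx) : ∀ i, (updL n A cs c0 vs i).length = vs.length := by
  induction vs with
  | nil => intro i; rfl
  | cons v vs ih => intro i; simp [updL, ih]

theorem updL_get_lt (n : ℕ) (A cs : List ℕ) (c0 : ℕ) (t : Vx) (vs : List Vx) : ∀ i j, j < vs.length →
    get (updL n A cs c0 vs i ++ [t]) j = updV n A cs c0 (i + j) (get vs j) := by
  induction vs with
  | nil => intro i j h; simp at h
  | cons v vs ih =>
    intro i j h
    cases j with
    | zero => rfl
    | succ j =>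
      simp only [updL, List.cons_append, get_succ]
      rw [ih _ _ (by simpa using h)]; congr 1; omega

theorem updL_get_eq (n : ℕ) (A cs : List ℕ) (c0 : ℕ) (t : Vx) (vs : List Vx) : ∀ i,
    get (updL n A cs c0 vs i ++ [t]) vs.length = t := by
  induction vs with
  | nil => intro i; rfl
  | cons v vs ih =>
    intro i
    simp only [updL, List.cons_append, get_succ, List.length_cons]
    exact ih _

theorem addL_eq {α : Type} (n : ℕ) (A cs : List ℕ) (c0 : ℕ) (t : Vx) (vs : List Vx) :
    ∀ (i : ℕ) (k : List Vx → α), addL n A cs c0 t vs i k = k (updL n A cs c0 vs i ++ [t]) := by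
  induction vs with
  | nil => intro i k; rfl
  | cons v vs ih =>
    intro i k
    have e : addL n A cs c0 t (v :: vs) i k = frc (ite' (mem v.c cs) c0 v.c) fun c =>
      @Bool.rec (fun _ => α) (addL n A cs c0 t vs (Nat.succ i) fun r => k (⟨v.w, v.d, v.nb, c⟩ :: r))
      (addL n A cs c0 t vs (Nat.succ i) fun r => k (⟨v.w, v.d, n :: v.nb, c⟩ :: r)) (mem i A) := rfl
    rw [e, frc_eq, ih, ih]
    have hc : ite' (mem v.c cs) c0 v.c = if v.c ∈ cs then c0 else v.c := by
      rw [ite'_eq]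
      by_cases h : v.c ∈ cs
      · rw [if_pos h, (mem_iff _ _).2 h]; rfl
      · rw [if_neg h, (mem_false _ _).2 h]; rfl
    rw [hc]
    by_cases h : i ∈ A
    · rw [(mem_iff _ _).2 h]; simp [updL, updV, h]
    · rw [(mem_false _ _).2 h]; simp [updL, updV, h]

def cs' (S : Gs) (A : List ℕ) : List ℕ := A.map fun a => (get S.vs a).c
def c0' (S : Gs) (A : List ℕ) : ℕ := head' (cs' S A) S.n
def vs' (S : Gs) (w d : ℕ) (A : List ℕ) : List Vx :=
  updL S.n A (cs' S A) (c0' S A) S.vs 0 ++ [⟨w, d, A, c0' S A⟩]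
def addG (S : Gs) (w d : ℕ) (A : List ℕ) : Gs :=
  ⟨S.n + 1, vs' S w d A, S.W + (w - d) * 4 ^ S.n,
    newb ⟨S.n + 1, vs' S w d A, S.W + (w - d) * 4 ^ S.n, [], []⟩ (S.n :: A) S.b,
    if 2 ≤ w - d then S.n :: S.h else S.h⟩

theorem addV_eq {α : Type} (S : Gs) (w d : ℕ) (A : List ℕ) (k : Gs → α) :
    addV S w d A k = k (addG S w d A) := by
  unfold addV
  rw [frc_eq, frc_eq, addL_eq, map'_eq]
  unfold addG
  congr 1
  congr 1
  by_cases h : 2 ≤ w - d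
  · rw [if_pos h, show Nat.ble 2 (Nat.sub w d) = true from (ble_iff _ _).2 h]
  · rw [if_neg h]
    have : Nat.ble 2 (Nat.sub w d) = false := by
      cases h' : Nat.ble 2 (Nat.sub w d)
      · rfl
      · exact absurd ((ble_iff _ _).1 h') h
    rw [this]

theorem newb_sub (S : Gs) (l b : List ℕ) (y : ℕ) (h : y ∈ newb S l b) :
    y ∈ b ∨ (y ∈ l ∧ isBad S y = true) := by
  induction l with
  | nil => exact Or.inl h
  | cons x l ih =>
    have e : newb S (x :: l) b = @Bool.rec (fun _ => List ℕ) (newb S l b) (x :: newb S l b)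
      (and' (isBad S x) (not' (mem x b))) := rfl
    rw [e] at h
    cases hb : and' (isBad S x) (not' (mem x b)) with
    | false =>
      rw [hb] at h
      rcases ih h with h | h
      · exact Or.inl h
      · exact Or.inr ⟨List.mem_cons_of_mem _ h.1, h.2⟩
    | true =>
      rw [hb] at h
      rcases List.mem_cons.1 h with rfl | h
      · exact Or.inr ⟨List.mem_cons_self, ((and'_iff _ _).1 hb).1⟩
      · rcases ih h with h | h
        · exact Or.inl h
        · exact Or.inr ⟨List.mem_cons_of_mem _ h.1, h.2⟩

theorem isBad_cases (S : Gs) (x : ℕ) (h : isBad S x = true) :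
    ∃ p q r, nb S x = p :: q :: r ∧ 1 ≤ aw S p ∧ 1 ≤ aw S q := by
  unfold isBad at h
  generalize hl : nb S x = l at h ⊢
  rcases l with _ | ⟨p, _ | ⟨q, r⟩⟩
  · exact absurd h Bool.false_ne_true
  · exact absurd h Bool.false_ne_true
  · change and' (Nat.ble 1 (aw S p)) (Nat.ble 1 (aw S q)) = true at h
    rw [and'_iff, ble_iff, ble_iff] at h
    exact ⟨p, q, r, rfl, h⟩

def HK (C : Config) (f : ℕ → C.V) (n : ℕ) : SimpleGraph C.V where
  Adj u v := C.graph.Adj u v ∧ (∃ i < n, f i = u) ∧ (∃ i < n, f i = v)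
  symm := ⟨fun _ _ h => ⟨h.1.symm, h.2.2, h.2.1⟩⟩
  loopless := ⟨fun _ h => h.1.ne rfl⟩

theorem HK_mono (C : Config) (f : ℕ → C.V) {n m : ℕ} (h : n ≤ m) : HK C f n ≤ HK C f m := by
  rintro u v ⟨h1, ⟨i, hi, hu⟩, ⟨j, hj, hv⟩⟩
  exact ⟨h1, ⟨i, by omega, hu⟩, ⟨j, by omega, hv⟩⟩

structure GOK (C : Config) (f : ℕ → C.V) (S : Gs) : Prop where
  len : S.vs.length = S.n
  inj : ∀ i < S.n, ∀ j < S.n, f i = f j → i = j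
  wt : ∀ i < S.n, C.w (f i) = (get S.vs i).w
  dg : ∀ i < S.n, C.deg (f i) = (get S.vs i).d
  nd : ∀ i < S.n, (nb S i).Nodup
  nbm : ∀ i < S.n, ∀ j, j ∈ nb S i ↔ j < S.n ∧ C.graph.Adj (f i) (f j)
  cl : ∀ i < S.n, (get S.vs i).c < S.n
  conn : ∀ i < S.n, ∀ j < S.n, (get S.vs i).c = (get S.vs j).c → (HK C f S.n).Reachable (f i) (f j)
  Wlt : S.W < 4 ^ S.n
  awt : ∀ i < S.n, C.adjw (f i) = aw S i
  bd : ∀ x ∈ S.b, x < S.n ∧ C.IsBad (f x) ∧ ∀ z, C.graph.Adj (f x) z → ∃ j < S.n, f j = z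
  hv : ∀ x ∈ S.h, x < S.n ∧ 1 < C.adjw (f x)

theorem aw_old (W n i a : ℕ) (h : i < n) : (W + a * 4 ^ n) / 4 ^ i % 4 = W / 4 ^ i % 4 := by
  obtain ⟨k, rfl⟩ := Nat.exists_eq_add_of_lt h
  have : a * 4 ^ (i + k + 1) = 4 ^ i * (4 * (a * 4 ^ k)) := by ring
  rw [this, Nat.add_mul_div_left _ _ (by positivity), Nat.add_mul_mod_self_left]

theorem aw_new (W n a : ℕ) (h : W < 4 ^ n) (ha : a < 4) : (W + a * 4 ^ n) / 4 ^ n % 4 = a := by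
  rw [Nat.add_mul_div_right _ _ (by positivity), Nat.div_eq_of_lt h, zero_add, Nat.mod_eq_of_lt ha]

theorem GOK_add {C : Config} (hl : C.IsLinear) {f : ℕ → C.V} {S : Gs} (h : GOK C f S) {w d : ℕ} {A : List ℕ}
    (hnew : ∀ i < S.n, f i ≠ f S.n) (hw : C.w (f S.n) = w) (hd : C.deg (f S.n) = d)
    (hwd : d ≤ w) (h3 : C.adjw (f S.n) ≤ 3) (hA : A.Nodup)
    (hAm : ∀ j, j ∈ A ↔ j < S.n ∧ C.graph.Adj (f S.n) (f j)) : GOK C f (addG S w d A) := by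
  have hadjw : C.adjw (f S.n) = ((w - d : ℕ) : ℤ) := by
    unfold Config.adjw; rw [hw, hd]; omega
  have h4 : w - d < 4 := by omega
  have gl : ∀ i < S.n, get (vs' S w d A) i = updV S.n A (cs' S A) (c0' S A) i (get S.vs i) := by
    intro i hi
    unfold vs'; rw [updL_get_lt _ _ _ _ _ _ _ _ (by rw [h.len]; exact hi), zero_add]
  have gn : get (vs' S w d A) S.n = ⟨w, d, A, c0' S A⟩ := by
    unfold vs'
    have := updL_get_eq S.n A (cs' S A) (c0' S A) ⟨w, d, A, c0' S A⟩ S.vs 0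
    rwa [h.len] at this
  have hlt : ∀ {i}, i < S.n + 1 → i < S.n ∨ i = S.n := fun h => by omega
  have hadjn : ∀ i, ¬ C.graph.Adj (f i) (f i) := fun i => C.graph.loopless.irrefl _
  have hinj : ∀ i < S.n + 1, ∀ j < S.n + 1, f i = f j → i = j := by
    intro i hi j hj e
    rcases hlt hi with hi | rfl <;> rcases hlt hj with hj | rfl
    · exact h.inj i hi j hj e
    · exact absurd e (hnew i hi)
    · exact absurd e.symm (hnew j hj)
    · rfl
  have hnd : ∀ i < S.n + 1, (nb (addG S w d A) i).Nodup := by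
    intro i hi
    change (get (vs' S w d A) i).nb.Nodup
    rcases hlt hi with hi | rfl
    · rw [gl i hi]
      unfold updV
      dsimp only
      split_ifs
      · refine List.nodup_cons.2 ⟨fun hm => ?_, h.nd i hi⟩
        exact absurd ((h.nbm i hi _).1 hm).1 (lt_irrefl _)
      · exact h.nd i hi
    · rw [gn]; exact hA
  have hnbm : ∀ i < S.n + 1, ∀ j, j ∈ nb (addG S w d A) i ↔ j < S.n + 1 ∧ C.graph.Adj (f i) (f j) := by
    intro i hi j
    change j ∈ (get (vs' S w d A) i).nb ↔ _
    rcases hlt hi with hi | rfl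
    · rw [gl i hi]
      unfold updV
      dsimp only
      have hA' : i ∈ A ↔ C.graph.Adj (f S.n) (f i) := by rw [hAm]; simp [hi]
      have hn := h.nbm i hi j
      unfold nb at hn
      split_ifs with hiA
      · rw [List.mem_cons, hn]
        constructor
        · rintro (rfl | h')
          · exact ⟨by omega, (hA'.1 hiA).symm⟩
          · exact ⟨by omega, h'.2⟩
        · rintro ⟨hj, h'⟩
          rcases hlt hj with hj | rfl
          · exact Or.inr ⟨hj, h'⟩
          · exact Or.inl rfl
      · rw [hn]
        constructor
        · rintro h'; exact ⟨by omega, h'.2⟩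
        · rintro ⟨hj, h'⟩
          rcases hlt hj with hj | rfl
          · exact ⟨hj, h'⟩
          · exact absurd (hA'.2 h'.symm) hiA
    · rw [gn]
      dsimp only
      rw [hAm]
      constructor
      · rintro h'; exact ⟨by omega, h'.2⟩
      · rintro ⟨hj, h'⟩
        rcases hlt hj with hj | rfl
        · exact ⟨hj, h'⟩
        · exact absurd h' (hadjn _)
  have hawt : ∀ i < S.n + 1, C.adjw (f i) = aw (addG S w d A) i := by
    intro i hi
    change _ = (((S.W + (w - d) * 4 ^ S.n) / 4 ^ i % 4 : ℕ) : ℤ)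
    rcases hlt hi with hi | rfl
    · rw [aw_old _ _ _ _ hi]; exact h.awt i hi
    · rw [aw_new _ _ _ h.Wlt h4, hadjw]
  have hc0 : A = [] ∧ c0' S A = S.n ∨ ∃ a ∈ A, c0' S A = (get S.vs a).c := by
    rcases A with _ | ⟨a, A⟩
    · exact Or.inl ⟨rfl, rfl⟩
    · exact Or.inr ⟨a, List.mem_cons_self, rfl⟩
  have hcl : ∀ i < S.n + 1, (get (vs' S w d A) i).c < S.n + 1 := by
    have hcc : c0' S A < S.n + 1 := by
      rcases hc0 with ⟨_, e⟩ | ⟨a, ha, e⟩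
      · omega
      · have := h.cl a ((hAm a).1 ha).1; omega
    intro i hi
    rcases hlt hi with hi | rfl
    · rw [gl i hi]; unfold updV; dsimp only
      have := h.cl i hi
      split_ifs <;> omega
    · rw [gn]; exact hcc
  have hzc : ∀ i < S.n, (get S.vs i).c ∈ cs' S A → (HK C f (S.n + 1)).Reachable (f i) (f S.n) := by
    intro i hi hm
    obtain ⟨a, ha, e⟩ := List.mem_map.1 hm
    have ha' := (hAm a).1 ha
    refine ((h.conn i hi a ha'.1 e.symm).mono (HK_mono C f (Nat.le_succ _))).trans ?_
    have this : (HK C f (S.n + 1)).Adj (f a) (f S.n) :=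
      ⟨ha'.2.symm, ⟨a, by omega, rfl⟩, ⟨S.n, by omega, rfl⟩⟩
    exact this.reachable
  have hz : ∀ i < S.n + 1, (get (vs' S w d A) i).c = c0' S A → (HK C f (S.n + 1)).Reachable (f i) (f S.n) := by
    intro i hi
    rcases hlt hi with hi | rfl
    · rw [gl i hi]; unfold updV; dsimp only
      split_ifs with hm
      · intro _; exact hzc i hi hm
      · intro e
        rcases hc0 with ⟨_, e'⟩ | ⟨a, ha, e'⟩
        · have := h.cl i hi; omega
        · exfalso; apply hm; rw [e, e']; exact List.mem_map.2 ⟨a, ha, rfl⟩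
    · intro _; exact SimpleGraph.Reachable.refl _
  refine ⟨?_, hinj, ?_, ?_, hnd, hnbm, hcl, ?_, ?_, hawt, ?_, ?_⟩
  · change (updL S.n A (cs' S A) (c0' S A) S.vs 0 ++ [(⟨w, d, A, c0' S A⟩ : Vx)]).length = S.n + 1
    rw [List.length_append, updL_length, h.len]; rfl
  · intro i hi
    change _ = (((get (vs' S w d A) i).w : ℕ) : ℤ)
    rcases hlt hi with hi | rfl
    · rw [gl i hi]; exact h.wt i hi
    · rw [gn]; exact hw
  · intro i hi
    change _ = (get (vs' S w d A) i).d
    rcases hlt hi with hi | rfl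
    · rw [gl i hi]; exact h.dg i hi
    · rw [gn]; exact hd
  · intro i hi j hj e
    change (get (vs' S w d A) i).c = (get (vs' S w d A) j).c at e
    by_cases h1 : (get (vs' S w d A) i).c = c0' S A
    · exact (hz i hi h1).trans (hz j hj (e ▸ h1)).symm
    · have h2 : (get (vs' S w d A) j).c ≠ c0' S A := e ▸ h1
      rcases hlt hi with hi | rfl
      · rcases hlt hj with hj | rfl
        · rw [gl i hi] at e h1
          rw [gl j hj] at e h2
          unfold updV at e h1 h2
          dsimp only at e h1 h2
          have h1' : (get S.vs i).c ∉ cs' S A := fun hm => h1 (if_pos hm)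
          have h2' : (get S.vs j).c ∉ cs' S A := fun hm => h2 (if_pos hm)
          rw [if_neg h1', if_neg h2'] at e
          exact (h.conn i hi j hj e).mono (HK_mono C f (Nat.le_succ _))
        · rw [gn] at h2; exact absurd rfl h2
      · rw [gn] at h1; exact absurd rfl h1
  · change S.W + (w - d) * 4 ^ S.n < 4 ^ (S.n + 1)
    have := h.Wlt
    have : (w - d) * 4 ^ S.n ≤ 3 * 4 ^ S.n := Nat.mul_le_mul_right _ (by omega)
    rw [pow_succ]; omega
  · intro x hx
    change x ∈ newb ⟨S.n+1, vs' S w d A, S.W + (w-d)*4^S.n, [], []⟩ (S.n :: A) S.b at hx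
    rcases newb_sub _ _ _ _ hx with hx | ⟨hx, hb⟩
    · obtain ⟨h1, h2, h3⟩ := h.bd x hx
      exact ⟨Nat.lt_succ_of_lt h1, h2, fun z hz => by
        obtain ⟨j, hj, e⟩ := h3 z hz; exact ⟨j, Nat.lt_succ_of_lt hj, e⟩⟩
    · have hxn : x < S.n + 1 := by
        rcases List.mem_cons.1 hx with rfl | hx
        · omega
        · have := ((hAm x).1 hx).1; omega
      obtain ⟨p, q, r, e, hp, hq⟩ := isBad_cases _ _ hb
      have e : nb (addG S w d A) x = p :: q :: r := e
      have hp : 1 ≤ aw (addG S w d A) p := hp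
      have hq : 1 ≤ aw (addG S w d A) q := hq
      have hp' := (hnbm x hxn p).1 (by rw [e]; simp)
      have hq' := (hnbm x hxn q).1 (by rw [e]; simp)
      have hpq : p ≠ q := by
        have := hnd x hxn; rw [e] at this
        intro hh; subst hh; simp at this
      have hpq' : f p ≠ f q := fun hh => hpq (hinj _ hp'.1 _ hq'.1 hh)
      refine ⟨hxn, ⟨f p, f q, hpq', hp'.2, hq'.2, ?_, ?_⟩, ?_⟩
      · rw [hawt p hp'.1]; omega
      · rw [hawt q hq'.1]; omega
      · intro z hz
        rcases deg_two hl hpq' hp'.2 hq'.2 hz with rfl | rfl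
        · exact ⟨p, hp'.1, rfl⟩
        · exact ⟨q, hq'.1, rfl⟩
  · intro x hx
    change x ∈ (if 2 ≤ w - d then S.n :: S.h else S.h) at hx
    change x < S.n + 1 ∧ _
    split_ifs at hx with h2
    · rcases List.mem_cons.1 hx with rfl | hx
      · exact ⟨by omega, by rw [hadjw]; omega⟩
      · have := h.hv x hx; exact ⟨by omega, this.2⟩
    · have := h.hv x hx; exact ⟨by omega, this.2⟩

/-- acyclicity: distinct known neighbours of a new vertex have distinct labels -/
theorem label_ne {C : Config} (hl : C.IsLinear) {f : ℕ → C.V} {S : Gs} (h : GOK C f S) {z : C.V}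
    (hnew : ∀ i < S.n, f i ≠ z) {a b : ℕ} (ha : a < S.n) (hb : b < S.n) (hab : a ≠ b)
    (hza : C.graph.Adj z (f a)) (hzb : C.graph.Adj z (f b)) : (get S.vs a).c ≠ (get S.vs b).c := by
  intro e
  have hr := h.conn a ha b hb e
  have hbr := (SimpleGraph.isAcyclic_iff_forall_adj_isBridge.1 hl.2) hza
  rw [SimpleGraph.isBridge_iff] at hbr
  apply hbr
  have hfab : f b ≠ f a := fun hh => hab (h.inj _ ha _ hb hh.symm)
  have e1 : (C.graph.deleteEdges {s(z, f a)}).Adj z (f b) := by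
    rw [SimpleGraph.deleteEdges_adj]
    refine ⟨hzb, ?_⟩
    simp [hfab, (hnew a ha).symm]
  refine e1.reachable.trans (hr.symm.mono ?_)
  rintro u v ⟨h1, ⟨i, hi, rfl⟩, ⟨j, hj, rfl⟩⟩
  rw [SimpleGraph.deleteEdges_adj]
  refine ⟨h1, ?_⟩
  simp [hnew i hi, hnew j hj]

structure PathL (C : Config) (f : ℕ → C.V) (n : ℕ) (l : List ℕ) : Prop where
  nd : l.Nodup
  lt : ∀ i ∈ l, i < n
  ch : l.IsChain fun i j => C.graph.Adj (f i) (f j)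

theorem walk_cons (S : Gs) (p : ℕ) (ps cands vis : List ℕ) : walk S (p :: ps) cands vis =
    any' cands fun z => and' (Nat.beq (aw S z) p) (and' (not' (mem z vis)) (walk S ps (nb S z) (z :: vis))) := rfl

theorem walk_sound {C : Config} {f : ℕ → C.V} {S : Gs} (h : GOK C f S) : ∀ (p cands vis : List ℕ),
    PathL C f S.n vis → (∀ z ∈ cands, z < S.n ∧ ∀ v r, vis = v :: r → C.graph.Adj (f z) (f v)) →
    walk S p cands vis = true →
    ∃ l, PathL C f S.n l ∧ l.map (aw S) = p.reverse ++ vis.map (aw S) := by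
  intro p
  induction p with
  | nil => intro cands vis hv _ _; exact ⟨vis, hv, by simp⟩
  | cons p ps ih =>
    intro cands vis hv hc hw
    rw [walk_cons, any'_iff] at hw
    obtain ⟨z, hz, hw⟩ := hw
    rw [and'_iff, and'_iff, beq_iff, not'_iff, mem_iff] at hw
    obtain ⟨h1, h2, h3⟩ := hw
    obtain ⟨hzn, hza⟩ := hc z hz
    have hv' : PathL C f S.n (z :: vis) := by
      refine ⟨List.nodup_cons.2 ⟨h2, hv.nd⟩, ?_, ?_⟩
      · intro i hi
        rcases List.mem_cons.1 hi with rfl | hi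
        · exact hzn
        · exact hv.lt i hi
      · rcases vis with _ | ⟨v, r⟩
        · exact List.isChain_singleton _
        · exact List.isChain_cons_cons.2 ⟨hza v r rfl, hv.ch⟩
    obtain ⟨l, hl, e⟩ := ih (nb S z) (z :: vis) hv' (by
      intro y hy
      obtain ⟨hy1, hy2⟩ := (h.nbm z hzn y).1 hy
      refine ⟨hy1, ?_⟩
      intro v r e
      injection e with e1 e2
      rw [← e1]; exact hy2.symm) h3
    refine ⟨l, hl, ?_⟩
    rw [e, List.map_cons, h1, List.reverse_cons, List.append_assoc]; rfl

theorem pathL_pat {C : Config} {f : ℕ → C.V} {S : Gs} (h : GOK C f S) (l p : List ℕ)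
    (hl : PathL C f S.n l) (hne : p ≠ []) (e : l.map (aw S) = p) : C.HasPattern (p.map fun x : ℕ => (x : ℤ)) := by
  have hlen : l.length = p.length := by rw [← e, List.length_map]
  have hpos : 0 < p.length := List.length_pos_iff.2 hne
  have hg : ∀ i (hi : i < l.length), l.getD i 0 = l[i] := fun i hi => by
    rw [List.getD_eq_getElem?_getD, List.getElem?_eq_getElem hi]; rfl
  refine ⟨p.length - 1, fun i => f (l.getD i 0), ⟨?_, ?_⟩, ?_, ?_⟩
  · intro i hi j hj hij
    have hi : i < l.length := by omega
    have hj : j < l.length := by omega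
    dsimp only at hij
    rw [hg i hi, hg j hj] at hij
    exact (List.Nodup.getElem_inj_iff hl.nd).1 (h.inj _ (hl.lt _ (List.getElem_mem _)) _ (hl.lt _ (List.getElem_mem _)) hij)
  · intro i hi
    dsimp only
    rw [hg i (by omega), hg (i+1) (by omega)]
    exact List.isChain_iff_getElem.1 hl.ch i (by omega)
  · rw [List.length_map]; omega
  · intro i
    have hi : (i : ℕ) < l.length := by have h2 := i.2; have h3 : (p.map fun x : ℕ => (x : ℤ)).length = p.length := List.length_map _; omega
    dsimp only
    rw [hg i hi, h.awt _ (hl.lt _ (List.getElem_mem _))]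
    subst e
    simp

theorem walk_no {C : Config} {f : ℕ → C.V} {S : Gs} (h : GOK C f S)
    (VI : ∀ p ∈ forbiddenPatterns, ¬ C.HasPattern p) (p cands : List ℕ) (hc : ∀ z ∈ cands, z < S.n)
    (hp : p.reverse ≠ []) (hm : (p.reverse.map fun x : ℕ => (x : ℤ)) ∈ forbiddenPatterns) : not' (walk S p cands []) = true := by
  rw [not'_iff]
  intro hh
  obtain ⟨l, hl, e⟩ := walk_sound h p cands [] ⟨List.nodup_nil, by simp, List.isChain_nil⟩
    (fun z hz => ⟨hc z hz, by intro v r e; cases e⟩) hh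
  refine VI _ hm (pathL_pat h l _ hl hp ?_)
  rw [e]; simp

theorem mem_rng (n i : ℕ) : i ∈ rng n ↔ i < n := by
  induction n with
  | zero => simp [rng]
  | succ n ih =>
    change i ∈ n :: rng n ↔ _
    rw [List.mem_cons, ih]; omega

theorem no11_sound {C : Config} {f : ℕ → C.V} {S : Gs} (h : GOK C f S) (g : ℕ → ℕ → Bool)
    (H : ∀ u < S.n, ∀ t < S.n, C.graph.Adj (f u) (f t) → C.adjw (f u) = 1 → C.adjw (f t) = 1 → g u t = true) :
    no11 S (rng S.n) g = true := by
  unfold no11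
  rw [all'_iff]; intro u hu
  rw [mem_rng] at hu
  rw [or'_iff, not'_iff]
  by_cases h1 : aw S u = 1
  · right; rw [all'_iff]; intro t ht
    obtain ⟨ht1, ht2⟩ := (h.nbm u hu t).1 ht
    rw [or'_iff, not'_iff]
    by_cases h2 : aw S t = 1
    · right; exact H u hu t ht1 ht2 (by rw [h.awt u hu, h1]; rfl) (by rw [h.awt t ht1, h2]; rfl)
    · left; intro hh; exact h2 ((beq_iff _ _).1 hh)
  · left; intro hh; exact h1 ((beq_iff _ _).1 hh)

theorem bneq (a b : ℕ) : not' (Nat.beq a b) = true ↔ a ≠ b := by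
  rw [not'_iff, Ne, beq_iff]

theorem wcok_sound {C : Config} {f : ℕ → C.V} {S : Gs} (h : GOK C f S)
    (hwc : C.WorkingConditions) (B : BadFacts C) : wcok S = true := by
  obtain ⟨_, _, hII, hIII, hIV, hV, hVI, _⟩ := hwc
  have ne3 : ∀ i < S.n, C.adjw (f i) ≠ 3 → aw S i ≠ 3 := by
    intro i hi h1 h2; apply h1; rw [h.awt i hi, h2]; rfl
  have eq1 : ∀ i < S.n, C.adjw (f i) = 1 → aw S i = 1 := by
    intro i hi h1; rw [h.awt i hi] at h1; exact_mod_cast h1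
  unfold wcok
  rw [and'_iff]
  constructor
  · rw [all'_iff]; intro x hx
    obtain ⟨hxn, hxb, hxk⟩ := h.bd x hx
    unfold badOK
    rw [and'_iff, bneq]
    refine ⟨ne3 x hxn (B.F3 _ hxb), ?_⟩
    rw [all'_iff]; intro y hy
    obtain ⟨hyn, hyb, hyk⟩ := h.bd y hy
    rw [or'_iff, beq_iff]
    by_cases hxy : x = y
    · exact Or.inl hxy
    right
    have hfxy : f x ≠ f y := fun e => hxy (h.inj _ hxn _ hyn e)
    rw [and'_iff, and'_iff]
    refine ⟨?_, ?_, ?_⟩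
    · rw [or'_iff, mem_iff]
      rcases B.F1 _ _ hxb hyb hfxy with h1 | ⟨z, h1, h2⟩
      · exact Or.inl ((h.nbm x hxn y).2 ⟨hyn, h1⟩)
      · obtain ⟨j, hj, rfl⟩ := hxk z h1
        right; rw [any'_iff]
        exact ⟨j, (h.nbm x hxn j).2 ⟨hj, h1⟩, (mem_iff _ _).2 ((h.nbm y hyn j).2 ⟨hj, h2⟩)⟩
    · rw [all'_iff]; intro z hz
      obtain ⟨hzn, hz⟩ := (h.nbm x hxn z).1 hz
      rw [and'_iff, bneq, or'_iff, not'_iff, mem_iff, beq_iff]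
      refine ⟨ne3 z hzn (B.F5 _ _ _ hxb hyb hfxy hz), ?_⟩
      by_cases hm : z ∈ nb S y
      · right; exact eq1 z hzn (B.F6 _ _ _ hxb hyb hfxy hz ((h.nbm y hyn z).1 hm).2)
      · exact Or.inl hm
    · rw [all'_iff]; intro z hz
      obtain ⟨hzn, hzb, _⟩ := h.bd z hz
      rw [or'_iff, or'_iff, beq_iff, beq_iff, beq_iff]
      by_cases h1 : z = x
      · exact Or.inl h1
      by_cases h2 : z = y
      · exact Or.inr (Or.inl h2)
      right; right
      refine eq1 x hxn (B.F4 _ _ _ hxb hyb hzb hfxy ?_ ?_)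
      · exact fun e => h1 (h.inj _ hxn _ hzn e).symm
      · exact fun e => h2 (h.inj _ hyn _ hzn e).symm
  · rw [all'_iff]; intro v hv
    obtain ⟨hvn, hv1⟩ := h.hv v hv
    have hs : ∀ z ∈ [v], z < S.n := by simpa using hvn
    unfold heavyOK
    rw [and'_iff]
    constructor
    · rw [all'_iff]; intro x hx
      obtain ⟨hxn, hxb, _⟩ := h.bd x hx
      rw [or'_iff, bneq, mem_iff]
      by_cases h1 : aw S x = 1
      · right
        exact (h.nbm x hxn v).2 ⟨hvn, hIII _ _ hv1 hxb (by rw [h.awt x hxn, h1]; rfl)⟩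
      · exact Or.inl h1
    · rw [ite'_iff, beq_iff]
      refine ⟨fun h3 => ?_, fun h3 => ?_⟩
      · rw [and'_iff, and'_iff]
        refine ⟨no11_sound h _ ?_, ?_, ?_⟩
        · intro u hu t ht ha h1 h2
          exact (hIV ⟨f v, by rw [h.awt v hvn, h3]; rfl⟩ _ _ ha h1 h2).elim
        · rw [all'_iff]; intro p hp
          apply walk_no h hVI _ _ hs
          · revert p; decide
          · revert p; decide
        · apply walk_no h hVI _ _ (fun z hz => (mem_rng _ _).1 hz) <;> decide
      · rw [and'_iff]
        constructor
        · rw [or'_iff, not'_iff, mem_iff]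
          by_cases hm : v ∈ S.b
          · right
            obtain ⟨_, hvb, _⟩ := h.bd v hm
            have h2 : C.adjw (f v) = 2 := by
              have := B.F3 _ hvb
              have h4 : aw S v < 4 := Nat.mod_lt _ (by norm_num)
              have := h.awt v hvn
              omega
            apply no11_sound h
            intro u hu t ht ha h1 h1'
            rw [or'_iff, mem_iff, mem_iff]
            rcases hV _ _ _ ha h1 h1' hvb h2 with h5 | h5
            · exact Or.inl ((h.nbm v hvn u).2 ⟨hu, h5⟩)
            · exact Or.inr ((h.nbm v hvn t).2 ⟨ht, h5⟩)
          · exact Or.inl hm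
        · rw [all'_iff]; intro p hp
          apply walk_no h hVI _ _ hs
          · revert p; decide
          · revert p; decide

def Qf {C : Config} {N : ℕ} (φ : C.V → Fin N → ℤ) (f : ℕ → C.V) : ℕ → Fin N → ℤ
  | 0, _ => 0
  | n + 1, k => 16 * Qf φ f n k + φ (f n) k

def Mf {C : Config} {N : ℕ} (φ : C.V → Fin N → ℤ) (f : ℕ → C.V) : ℕ → Fin N → ℕ
  | 0, _ => 0
  | n + 1, k => if φ (f n) k = 0 then Mf φ f n k else Mf φ f n k ||| 2 ^ n

theorem Qf_succ {C : Config} {N : ℕ} (φ : C.V → Fin N → ℤ) (f : ℕ → C.V) (n : ℕ) (k : Fin N) :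
    Qf φ f (n + 1) k = 16 * Qf φ f n k + φ (f n) k := rfl

theorem Mf_succ {C : Config} {N : ℕ} (φ : C.V → Fin N → ℤ) (f : ℕ → C.V) (n : ℕ) (k : Fin N) :
    Mf φ f (n + 1) k = if φ (f n) k = 0 then Mf φ f n k else Mf φ f n k ||| 2 ^ n := rfl

theorem Qf_congr {C : Config} {N : ℕ} (φ : C.V → Fin N → ℤ) (f g : ℕ → C.V) : ∀ n,
    (∀ i < n, f i = g i) → Qf φ f n = Qf φ g n
  | 0, _ => rfl
  | n + 1, h => by
    funext k; unfold Qf; rw [Qf_congr φ f g n (fun i hi => h i (by omega)), h n (by omega)]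

theorem Mf_congr {C : Config} {N : ℕ} (φ : C.V → Fin N → ℤ) (f g : ℕ → C.V) : ∀ n,
    (∀ i < n, f i = g i) → Mf φ f n = Mf φ g n
  | 0, _ => rfl
  | n + 1, h => by
    funext k; unfold Mf; rw [Mf_congr φ f g n (fun i hi => h i (by omega)), h n (by omega)]

theorem Mf_bit {C : Config} {N : ℕ} (φ : C.V → Fin N → ℤ) (f : ℕ → C.V) (k : Fin N) (i : ℕ) : ∀ n,
    (Mf φ f n k).testBit i = true ↔ i < n ∧ φ (f i) k ≠ 0
  | 0 => by simp [Mf]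
  | n + 1 => by
    unfold Mf
    have ih := Mf_bit φ f k i n
    split_ifs with h
    · rw [ih]
      constructor
      · rintro ⟨h1, h2⟩; exact ⟨by omega, h2⟩
      · rintro ⟨h1, h2⟩
        refine ⟨?_, h2⟩
        rcases Nat.lt_succ_iff_lt_or_eq.1 h1 with h3 | rfl
        · exact h3
        · exact absurd h h2
    · rw [Nat.testBit_or, Bool.or_eq_true, ih, Nat.testBit_two_pow]
      constructor
      · rintro (⟨h1, h2⟩ | h1)
        · exact ⟨by omega, h2⟩
        · have := of_decide_eq_true h1; subst this; exact ⟨by omega, h⟩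
      · rintro ⟨h1, h2⟩
        rcases Nat.lt_succ_iff_lt_or_eq.1 h1 with h3 | rfl
        · exact Or.inl ⟨h3, h2⟩
        · right; simp

theorem land_two_pow_ne (M i : ℕ) : Nat.land M (2 ^ i) ≠ 0 ↔ M.testBit i = true := by
  change M &&& 2 ^ i ≠ 0 ↔ _
  rw [Nat.and_two_pow]
  cases M.testBit i <;> simp

theorem bt_iff (M i : ℕ) : bt M i = true ↔ M.testBit i = true := by
  unfold bt; rw [bneq]; exact land_two_pow_ne M i

theorem MQ {C : Config} {N : ℕ} (φ : C.V → Fin N → ℤ) (f : ℕ → C.V) (b2 : ∀ v k, |φ v k| ≤ 2) (k : Fin N) : ∀ n,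
    Mf φ f n k ≠ 0 ↔ Qf φ f n k ≠ 0
  | 0 => by simp [Mf, Qf]
  | n + 1 => by
    have ih := MQ φ f b2 k n
    have hb := abs_le.1 (b2 (f n) k)
    unfold Mf Qf
    split_ifs with h
    · rw [ih, h]; omega
    · constructor
      · intro _; omega
      · intro _ h0
        have : (Mf φ f n k ||| 2 ^ n).testBit n = true := by
          rw [Nat.testBit_or, Nat.testBit_two_pow_self, Bool.or_true]
        rw [h0] at this; simp at this

structure Env (C : Config) (N : ℕ) (φ : C.V → Fin N → ℤ) : Prop where
  hl : C.IsLinear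
  hwc : C.WorkingConditions
  B : BadFacts C
  hφ : C.IsEmbedding N φ
  b2 : ∀ v k, |φ v k| ≤ 2

def PT (C : Config) (N : ℕ) (φ : C.V → Fin N → ℤ) (thr : ℕ) : Prop :=
  ∀ u v : C.V, u ≠ v → ¬ C.graph.Adj u v → (C.adjw u ≤ 0 ∨ C.adjw v ≤ 0) →
    code (C.w u).toNat (C.w v).toNat < thr → ∀ k, φ u k = 0 ∨ φ v k = 0

structure Real (C : Config) (N : ℕ) (φ : C.V → Fin N → ℤ) (st : St) (f : ℕ → C.V) : Prop where
  g : GOK C f st.S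
  r : GR (fun k => (Qf φ f st.S.n k).natAbs) (Mf φ f st.S.n) st.G (Finset.univ.filter fun k => Mf φ f st.S.n k ≠ 0)
  sm : ∀ v, (∀ i < st.S.n, f i ≠ v) → ∀ k, |φ v k| ≤ 1

theorem HK_congr (C : Config) (f g : ℕ → C.V) (n : ℕ) (h : ∀ i < n, f i = g i) : HK C f n = HK C g n := by
  have : ∀ u, (∃ i < n, f i = u) ↔ (∃ i < n, g i = u) := by
    intro u
    constructor
    · rintro ⟨i, hi, e⟩; exact ⟨i, hi, by rw [← h i hi, e]⟩
    · rintro ⟨i, hi, e⟩; exact ⟨i, hi, by rw [h i hi, e]⟩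
  ext u v
  change _ ∧ _ ∧ _ ↔ _ ∧ _ ∧ _
  rw [this, this]

theorem GOK_congr {C : Config} {f g : ℕ → C.V} {S : Gs} (h : GOK C f S) (e : ∀ i < S.n, f i = g i) : GOK C g S := by
  refine ⟨h.len, ?_, ?_, ?_, h.nd, ?_, h.cl, ?_, h.Wlt, ?_, ?_, ?_⟩
  · intro i hi j hj; rw [← e i hi, ← e j hj]; exact h.inj i hi j hj
  · intro i hi; rw [← e i hi]; exact h.wt i hi
  · intro i hi; rw [← e i hi]; exact h.dg i hi
  · intro i hi j; rw [← e i hi, h.nbm i hi]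
    constructor
    · rintro ⟨hj, ha⟩; rw [← e j hj]; exact ⟨hj, ha⟩
    · rintro ⟨hj, ha⟩; rw [← e j hj] at ha; exact ⟨hj, ha⟩
  · intro i hi j hj; rw [← e i hi, ← e j hj, ← HK_congr C f g _ e]; exact h.conn i hi j hj
  · intro i hi; rw [← e i hi]; exact h.awt i hi
  · intro x hx
    obtain ⟨h1, h2, h3⟩ := h.bd x hx
    rw [← e x h1]
    refine ⟨h1, h2, fun z hz => ?_⟩
    obtain ⟨j, hj, ej⟩ := h3 z hz
    exact ⟨j, hj, by rw [← e j hj, ej]⟩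
  · intro x hx
    obtain ⟨h1, h2⟩ := h.hv x hx
    rw [← e x h1]; exact ⟨h1, h2⟩

theorem Real_congr {C : Config} {N : ℕ} {φ : C.V → Fin N → ℤ} {st : St} {f g : ℕ → C.V}
    (h : Real C N φ st f) (e : ∀ i < st.S.n, f i = g i) : Real C N φ st g := by
  refine ⟨GOK_congr h.g e, ?_, ?_⟩
  · rw [← Qf_congr φ f g _ e, ← Mf_congr φ f g _ e]; exact h.r
  · intro v hv; apply h.sm; intro i hi; rw [e i hi]; exact hv i hi

theorem tgt_succ (A : List ℕ) (n : ℕ) : tgt A (n+1) = 16 * tgt A n + ite' (mem n A) 1 0 := rfl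

theorem tgt_sum {C : Config} {N : ℕ} (φ : C.V → Fin N → ℤ) (f : ℕ → C.V) (z : C.V) (A : List ℕ) : ∀ n,
    (∀ i < n, dot (φ z) (φ (f i)) = if i ∈ A then -1 else 0) →
    (tgt A n : ℤ) + ∑ k, φ z k * Qf φ f n k = 0
  | 0, _ => by simp [tgt, Qf]
  | n + 1, h => by
    have ih := tgt_sum φ f z A n (fun i hi => h i (by omega))
    have h1 := h n (by omega)
    unfold dot at h1
    have : ∑ k, φ z k * Qf φ f (n+1) k = 16 * ∑ k, φ z k * Qf φ f n k + ∑ k, φ z k * φ (f n) k := by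
      rw [Finset.mul_sum, ← Finset.sum_add_distrib]
      apply Finset.sum_congr rfl; intro k _; rw [Qf_succ]; ring
    rw [this, h1, tgt_succ, ite'_eq]
    by_cases hm : n ∈ A
    · rw [(mem_iff _ _).2 hm, if_pos hm, cond_true]; push_cast; linarith
    · have : mem n A = false := by rw [← Bool.not_eq_true, mem_iff]; exact hm
      rw [this, if_neg hm, cond_false]; push_cast; linarith

theorem forb_bit (vs : List Vx) (thr w d : ℕ) (A : List ℕ) (i : ℕ) : ∀ n,
    (forb vs thr w d A n).testBit i = true → i < n ∧ i ∉ A ∧ code w (get vs i).w < thr ∧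
      (w ≤ d ∨ (get vs i).w ≤ (get vs i).d)
  | 0 => by intro h; change (0:ℕ).testBit i = true at h; simp at h
  | n + 1 => by
    have ih := forb_bit vs thr w d A i n
    intro h
    change (ite' (and' (not' (mem n A)) (and' (Nat.ble (Nat.succ (code w (get vs n).w)) thr)
      (or' (Nat.ble w d) (Nat.ble (get vs n).w (get vs n).d))))
      (forb vs thr w d A n ||| 2 ^ n) (forb vs thr w d A n)).testBit i = true at h
    rw [ite'_eq] at h
    cases hc : (and' (not' (mem n A)) (and' (Nat.ble (Nat.succ (code w (get vs n).w)) thr)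
      (or' (Nat.ble w d) (Nat.ble (get vs n).w (get vs n).d)))) with
    | false =>
      rw [hc, cond_false] at h
      obtain ⟨h1, h2⟩ := ih h
      exact ⟨by omega, h2⟩
    | true =>
      rw [hc, cond_true, Nat.testBit_or, Bool.or_eq_true, Nat.testBit_two_pow] at h
      rcases h with h | h
      · obtain ⟨h1, h2⟩ := ih h
        exact ⟨by omega, h2⟩
      · have := of_decide_eq_true h
        subst this
        rw [and'_iff, and'_iff, or'_iff, ble_iff, ble_iff, ble_iff, not'_iff, mem_iff] at hc
        exact ⟨by omega, hc.1, hc.2.1, hc.2.2⟩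

theorem blocked_bit (F M : ℕ) (h : blocked F M = true) : ∃ i, M.testBit i = true ∧ F.testBit i = true := by
  unfold blocked at h
  rw [bneq] at h
  change M &&& F ≠ 0 at h
  obtain ⟨i, hi⟩ := Nat.exists_testBit_of_ne_zero h
  rw [Nat.testBit_and, Bool.and_eq_true] at hi
  exact ⟨i, hi⟩

theorem small3 {x : ℤ} (h : |x| ≤ 1) : x = 0 ∨ x = 1 ∨ x = -1 := by
  have := abs_le.1 h; omega

theorem card_supp {N : ℕ} (t : Fin N → ℤ) (h : ∀ k, |t k| ≤ 1) : ((Finset.univ.filter fun k => t k ≠ 0).card : ℤ) = dot t t := by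
  unfold dot
  rw [Finset.card_filter]; push_cast
  apply Finset.sum_congr rfl; intro k _
  rcases small3 (h k) with h | h | h <;> rw [h] <;> norm_num

theorem add_sound {C : Config} {N : ℕ} {φ : C.V → Fin N → ℤ} (E : Env C N φ) {thr : ℕ} (hP : PT C N φ thr)
    {st : St} {f : ℕ → C.V} (R : Real C N φ st f) (z : C.V) (hz : ∀ i < st.S.n, f i ≠ z) (A : List ℕ)
    (hA : A.Nodup) (hAm : ∀ j, j ∈ A ↔ j < st.S.n ∧ C.graph.Adj z (f j)) (w d : ℕ) (hw : C.w z = w)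
    (hd : C.deg z = d) (k : St → Bool) (h : add thr st w d A k = true) :
    ∃ st', Real C N φ st' (Function.update f st.S.n z) ∧ st'.S = addG st.S w d A ∧ k st' = true := by
  set n := st.S.n with hn
  set g := Function.update f n z with hg
  have gn : g n = z := Function.update_self ..
  have gl : ∀ i < n, f i = g i := fun i hi => (Function.update_of_ne (by omega) _ _).symm
  have R' := Real_congr R gl
  have hadj : C.adjw z = (w : ℤ) - d := by unfold Config.adjw; rw [hw, hd]
  have hd2 := E.hl.1 z
  have hw2 := E.hwc.1 z
  have h3 := E.hwc.2.1 z
  have G' : GOK C g (addG st.S w d A) := by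
    apply GOK_add E.hl R'.g
    · intro i hi; rw [← hn, gn, ← gl i hi]; exact hz i hi
    · rw [← hn, gn, hw]
    · rw [← hn, gn, hd]
    · omega
    · rw [← hn, gn]; exact h3
    · exact hA
    · intro j; rw [hAm, ← hn, gn]
      constructor
      · rintro ⟨h1, h2⟩; rw [← gl j h1]; exact ⟨h1, h2⟩
      · rintro ⟨h1, h2⟩; rw [← gl j h1] at h2; exact ⟨h1, h2⟩
  unfold add at h
  rw [addV_eq, ite'_iff] at h
  have h := h.1 (wcok_sound G' E.hwc E.B)
  rw [frc_eq, all'_iff] at h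
  have hsm := R.sm z hz
  have hdot : ∀ i < n, dot (φ z) (φ (g i)) = if i ∈ A then -1 else 0 := by
    intro i hi
    rw [E.hφ, ← gl i hi, if_neg (fun e => hz i hi e.symm)]
    by_cases hm : i ∈ A
    · rw [if_pos hm, if_pos ((hAm i).1 hm).2]
    · rw [if_neg hm, if_neg (fun ha => hm ((hAm i).2 ⟨hi, ha⟩))]
  have hsum := tgt_sum φ g z A n hdot
  have hQ0 : ∀ k, Mf φ g n k = 0 → Qf φ g n k = 0 := by
    intro k hk; by_contra hq; exact (MQ φ g E.b2 k n).2 hq hk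
  obtain ⟨G, hG, hGR⟩ := split_sound (Qf φ g n) (φ z) (Mf φ g n) (forb st.S.vs thr w d A n) (2 ^ n)
    (Finset.univ.filter fun k => Mf φ g n k = 0 ∧ φ z k ≠ 0) (fun k => small3 (hsm k))
    (by
      intro k hk
      obtain ⟨h1, h2⟩ := (Finset.mem_filter.1 hk).2
      rw [hQ0 k h1, h1, if_neg h2, Nat.zero_or]
      refine ⟨?_, rfl⟩
      rcases small3 (hsm k) with h | h | h
      · exact absurd h h2
      · rw [h]; rfl
      · rw [h]; rfl)
    st.G (Finset.univ.filter fun k => Mf φ g n k ≠ 0) R'.r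
    (by
      rw [Finset.disjoint_left]; intro k h1 h2
      exact (Finset.mem_filter.1 h1).2 (Finset.mem_filter.1 h2).2.1)
    (fun k hk => (MQ φ g E.b2 k n).1 (Finset.mem_filter.1 hk).2)
    (by
      intro k _ hb
      obtain ⟨i, h1, h2⟩ := blocked_bit _ _ hb
      obtain ⟨hi, hiA, hc, hor⟩ := forb_bit _ _ _ _ _ _ _ h2
      have h4 := ((Mf_bit _ _ _ _ _).1 h1).2
      have hwi := R'.g.wt i hi
      have hdi := R'.g.dg i hi
      have := hP z (g i) (by rw [← gl i hi]; exact fun e => hz i hi e.symm)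
        (by rw [← gl i hi]; exact fun ha => hiA ((hAm i).2 ⟨hi, ha⟩))
        (by
          rcases hor with h | h
          · left; omega
          · right; unfold Config.adjw; rw [hwi, hdi]; omega)
        (by rw [hw, hwi]; simpa using hc) k
      rcases this with h | h
      · exact h
      · exact absurd h h4)
    w (tgt A n) 0
    (by
      have h1 := card_supp (φ z) hsm
      rw [E.hφ, if_pos rfl, hw] at h1
      have h1 : (Finset.univ.filter fun k => φ z k ≠ 0).card = w := by exact_mod_cast h1
      rw [← h1, ← Finset.card_union_of_disjoint]
      · congr 1; ext k; simp only [Finset.mem_filter, Finset.mem_univ, true_and, Finset.mem_union]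
        tauto
      · rw [Finset.disjoint_left]; intro k h1 h2
        exact (Finset.mem_filter.1 (Finset.mem_filter.1 h1).1).2 (Finset.mem_filter.1 h2).2.1)
    (by
      rw [Finset.sum_filter]
      refine Eq.trans ?_ hsum
      congr 1
      apply Finset.sum_congr rfl; intro k _
      split_ifs with hk
      · rfl
      · rw [hQ0 k (not_not.1 hk), mul_zero])
  refine ⟨⟨addG st.S w d A, G⟩, ⟨G', ?_, ?_⟩, rfl, h G hG⟩
  · change GR (fun k => (Qf φ g (n+1) k).natAbs) (Mf φ g (n+1)) G (Finset.univ.filter fun k => Mf φ g (n+1) k ≠ 0)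
    have e1 : Qf φ g (n+1) = fun k => 16 * Qf φ g n k + φ z k := by
      funext k; rw [Qf_succ, gn]
    have e2 : Mf φ g (n+1) = fun k => if φ z k = 0 then Mf φ g n k else Mf φ g n k ||| 2 ^ n := by
      funext k; rw [Mf_succ, gn]
    have e3 : (Finset.univ.filter fun k => Mf φ g (n+1) k ≠ 0) = (Finset.univ.filter fun k => Mf φ g n k ≠ 0) ∪
        (Finset.univ.filter fun k => Mf φ g n k = 0 ∧ φ z k ≠ 0) := by
      ext k
      simp only [Finset.mem_filter, Finset.mem_univ, true_and, Finset.mem_union]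
      rw [MQ φ g E.b2, MQ φ g E.b2, e1]
      have h1 := MQ φ g E.b2 k n
      have h2 := small3 (hsm k)
      have h3 : Mf φ g n k = 0 ↔ Qf φ g n k = 0 := not_iff_not.1 h1
      rw [h3]
      dsimp only
      omega
    rw [e3, e1, e2]; exact hGR
  · intro v hv
    apply R.sm
    intro i hi
    rw [gl i hi]; exact hv i (Nat.lt_succ_of_lt hi)

theorem pick_sound (vs : List Vx) : ∀ i a, pick vs i = some a →
    ∃ j < vs.length, a = i + j ∧ (get vs j).nb.length < (get vs j).d := by
  induction vs with
  | nil => intro i a h; exact absurd h (by change (none : Option ℕ) ≠ some a; simp)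
  | cons v vs ih =>
    intro i a h
    change ite' (Nat.ble (Nat.succ v.nb.length) v.d) (some i) (pick vs (i+1)) = some a at h
    rw [ite'_eq] at h
    cases hc : Nat.ble (Nat.succ v.nb.length) v.d with
    | true =>
      rw [hc, cond_true] at h
      injection h with h
      exact ⟨0, by simp, by omega, (ble_iff _ _).1 hc⟩
    | false =>
      rw [hc, cond_false] at h
      obtain ⟨j, hj, e, hh⟩ := ih _ _ h
      exact ⟨j + 1, by simpa using hj, by omega, hh⟩

theorem exists_new {C : Config} {f : ℕ → C.V} {S : Gs} (h : GOK C f S) {a : ℕ} (ha : a < S.n)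
    (hlt : (nb S a).length < C.deg (f a)) : ∃ z, C.graph.Adj (f a) z ∧ ∀ i < S.n, f i ≠ z := by
  classical
  by_contra hno
  push Not at hno
  have hfin : ((nb S a).toFinset.image f : Set C.V).Finite := Finset.finite_toSet _
  have hsub : C.graph.neighborSet (f a) ⊆ ((nb S a).toFinset.image f : Finset C.V) := by
    intro z hz
    obtain ⟨i, hi, e⟩ := hno z hz
    rw [Finset.mem_coe, Finset.mem_image]
    exact ⟨i, List.mem_toFinset.2 ((h.nbm a ha i).2 ⟨hi, by rw [e]; exact hz⟩), e⟩
  have h1 := Set.ncard_le_ncard hsub (Finset.finite_toSet _)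
  rw [Set.ncard_coe_finset] at h1
  have h2 : ((nb S a).toFinset.image f).card ≤ (nb S a).length :=
    Finset.card_image_le.trans (List.toFinset_card_le _)
  unfold Config.deg at hlt
  omega

theorem unsat_of_new {C : Config} {f : ℕ → C.V} {S : Gs} (h : GOK C f S) {b : ℕ} (hb : b < S.n)
    {z : C.V} (hz : ∀ i < S.n, f i ≠ z) (ha : C.graph.Adj (f b) z) : unsat S.vs b = true := by
  classical
  have := C.fin
  unfold unsat
  rw [ble_iff, ← h.dg b hb]
  change (nb S b).length + 1 ≤ _
  have hinj : Set.InjOn f ((nb S b).toFinset : Finset ℕ) := by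
    intro i hi j hj e
    rw [Finset.mem_coe, List.mem_toFinset] at hi hj
    exact h.inj _ ((h.nbm b hb i).1 hi).1 _ ((h.nbm b hb j).1 hj).1 e
  have hzn : z ∉ (nb S b).toFinset.image f := by
    rw [Finset.mem_image]; rintro ⟨i, hi, e⟩
    rw [List.mem_toFinset] at hi
    exact hz i ((h.nbm b hb i).1 hi).1 e
  have hsub : ((insert z ((nb S b).toFinset.image f) : Finset C.V) : Set C.V) ⊆ C.graph.neighborSet (f b) := by
    intro y hy
    rw [Finset.mem_coe, Finset.mem_insert, Finset.mem_image] at hy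
    rcases hy with rfl | ⟨i, hi, rfl⟩
    · exact ha
    · rw [List.mem_toFinset] at hi
      exact ((h.nbm b hb i).1 hi).2
  have h1 := Set.ncard_le_ncard hsub (Set.toFinite _)
  rw [Set.ncard_coe_finset, Finset.card_insert_of_notMem hzn, Finset.card_image_of_injOn hinj,
    List.toFinset_card_of_nodup (h.nd b hb)] at h1
  exact h1

theorem deg_eq_two {C : Config} (hl : C.IsLinear) {z a b : C.V} (hab : a ≠ b) (ha : C.graph.Adj z a)
    (hb : C.graph.Adj z b) : C.deg z = 2 := by
  classical
  have := C.fin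
  have h1 := hl.1 z
  have hsub : ({a, b} : Set C.V) ⊆ C.graph.neighborSet z := by
    rintro y (rfl | rfl)
    · exact ha
    · exact hb
  have h2 := Set.ncard_le_ncard hsub (Set.toFinite _)
  rw [Set.ncard_pair hab] at h2
  unfold Config.deg at h1 ⊢
  omega

theorem deg_pos {C : Config} {z a : C.V} (ha : C.graph.Adj z a) : 1 ≤ C.deg z := by
  classical
  have := C.fin
  have hsub : ({a} : Set C.V) ⊆ C.graph.neighborSet z := by
    rintro y rfl; exact ha
  have h2 := Set.ncard_le_ncard hsub (Set.toFinite _)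
  rw [Set.ncard_singleton] at h2
  exact h2

theorem combos_mem {C : Config} {N : ℕ} {φ : C.V → Fin N → ℤ} (E : Env C N φ)
    {f : ℕ → C.V} {S : Gs} (h : GOK C f S) {z : C.V} (hz : ∀ i < S.n, f i ≠ z) (hd : 1 ≤ C.deg z)
    {w : ℕ} (hw : C.w z = w) : (w, C.deg z) ∈ combos S := by
  have h2 := E.hl.1 z
  have h3 := E.hwc.2.1 z
  have h4 := E.hwc.1 z
  unfold Config.adjw at h3
  generalize hdd : C.deg z = d at *
  unfold combos
  rcases hS : S.h with _ | ⟨v, r⟩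
  · change (w, d) ∈ [(2,1),(2,2),(3,2),(3,1),(4,1),(4,2),(5,2)]
    simp only [List.mem_cons, Prod.mk.injEq, List.not_mem_nil, or_false]
    omega
  · change (w, d) ∈ [(2,1),(2,2),(3,2)]
    obtain ⟨hv, hv1⟩ := h.hv v (by rw [hS]; simp)
    have : ¬ 1 < C.adjw z := fun hh => hz v hv (E.hwc.2.2.1 _ _ hv1 hh)
    unfold Config.adjw at this
    rw [hdd] at this
    simp only [List.mem_cons, Prod.mk.injEq, List.not_mem_nil, or_false]
    omega

theorem search_succ (thr : ℕ) (acc : St → Bool) (fuel : ℕ) (st : St) : search thr acc (fuel+1) st =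
    or' (acc st) (Option.rec false (fun a => all' (combos st.S) fun wd =>
        and' (add thr st wd.1 wd.2 [a] (search thr acc fuel))
        (or' (Nat.beq wd.2 1) (all' (opts st.S a) fun b =>
          add thr st wd.1 wd.2 [a, b] (search thr acc fuel)))) (pick st.S.vs 0)) := rfl

theorem search_sound {C : Config} {N : ℕ} {φ : C.V → Fin N → ℤ} (E : Env C N φ) {thr : ℕ} (hP : PT C N φ thr)
    (acc : St → Bool) : ∀ (fuel : ℕ) (st : St) (f : ℕ → C.V), Real C N φ st f → search thr acc fuel st = true →
    ∃ st' f', Real C N φ st' f' ∧ acc st' = true ∧ st.S.n ≤ st'.S.n ∧ ∀ i < st.S.n, f' i = f i := by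
  intro fuel
  induction fuel with
  | zero => intro st f _ h; exact absurd h (by change ¬ (false = true); simp)
  | succ fuel ih =>
    intro st f R h
    rw [search_succ, or'_iff] at h
    rcases h with h | h
    · exact ⟨st, f, R, h, le_refl _, fun _ _ => rfl⟩
    rcases hp : pick st.S.vs 0 with _ | a
    · rw [hp] at h; exact absurd h (by change ¬ (false = true); simp)
    rw [hp] at h
    obtain ⟨j, hj, e, hlt⟩ := pick_sound _ _ _ hp
    rw [zero_add] at e; subst e
    rw [R.g.len] at hj
    rw [← R.g.dg _ hj] at hlt
    obtain ⟨z, hz, hnew⟩ := exists_new R.g hj hlt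
    have hw0 := E.hwc.1 z
    obtain ⟨w, hw⟩ : ∃ w : ℕ, C.w z = w := ⟨(C.w z).toNat, by omega⟩
    have hd1 := deg_pos hz.symm
    have hc := combos_mem E R.g hnew hd1 hw
    change (all' (combos st.S) fun wd =>
        and' (add thr st wd.1 wd.2 [a] (search thr acc fuel))
        (or' (Nat.beq wd.2 1) (all' (opts st.S a) fun b =>
          add thr st wd.1 wd.2 [a, b] (search thr acc fuel)))) = true at h
    rw [all'_iff] at h
    have h := h _ hc
    rw [and'_iff, or'_iff] at h
    have fin : ∀ A : List ℕ, A.Nodup → (∀ j, j ∈ A ↔ j < st.S.n ∧ C.graph.Adj z (f j)) →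
        add thr st w (C.deg z) A (search thr acc fuel) = true →
        ∃ st' f', Real C N φ st' f' ∧ acc st' = true ∧ st.S.n ≤ st'.S.n ∧ ∀ i < st.S.n, f' i = f i := by
      intro A hA hAm hh
      obtain ⟨st1, R1, hs1, hk⟩ := add_sound E hP R z hnew A hA hAm w _ hw rfl _ hh
      obtain ⟨st', f', R', ha, hn, hf⟩ := ih st1 _ R1 hk
      have e1 : st1.S.n = st.S.n + 1 := by rw [hs1]; rfl
      refine ⟨st', f', R', ha, by omega, fun i hi => ?_⟩
      rw [hf i (by omega), Function.update_of_ne (by omega)]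
    by_cases hb : ∃ b < st.S.n, b ≠ a ∧ C.graph.Adj z (f b)
    · obtain ⟨b, hb, hba, hzb⟩ := hb
      have hfab : f a ≠ f b := fun e => hba (R.g.inj _ hj _ hb e).symm
      have hd2 := deg_eq_two E.hl hfab hz.symm hzb
      have h2 := h.2
      rcases h2 with h2 | h2
      · rw [beq_iff] at h2; dsimp only at h2; omega
      rw [all'_iff] at h2
      refine fin [a, b] (by simp [Ne.symm hba]) ?_ (h2 b ?_)
      · intro j
        simp only [List.mem_cons, List.not_mem_nil, or_false]
        constructor
        · rintro (rfl | rfl)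
          · exact ⟨hj, hz.symm⟩
          · exact ⟨hb, hzb⟩
        · rintro ⟨h3, h4⟩
          rcases deg_two E.hl hfab hz.symm hzb h4 with h5 | h5
          · exact Or.inl (R.g.inj _ h3 _ hj h5)
          · exact Or.inr (R.g.inj _ h3 _ hb h5)
      · unfold opts
        rw [filt'_eq, List.mem_filter, mem_rng, and'_iff, bneq]
        exact ⟨hb, unsat_of_new R.g hb hnew hzb.symm, label_ne E.hl R.g hnew hb hj hba hzb hz.symm⟩
    · push Not at hb
      refine fin [a] (by simp) ?_ h.1
      intro j
      rw [List.mem_singleton]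
      constructor
      · rintro rfl; exact ⟨hj, hz.symm⟩
      · rintro ⟨h3, h4⟩
        by_contra hja
        exact hb j h3 hja h4

theorem GOK_gs1 (C : Config) (f : ℕ → C.V) (w d : ℕ) (hw : C.w (f 0) = w) (hd : C.deg (f 0) = d)
    (hdw : d ≤ w) (h3 : w - d ≤ 3) : GOK C f (gs1 w d) := by
  have h0 : ∀ {i}, i < (gs1 w d).n → i = 0 := fun {i} hi => by
    change i < 1 at hi; omega
  have haw : C.adjw (f 0) = ((w - d : ℕ) : ℤ) := by unfold Config.adjw; rw [hw, hd]; omega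
  constructor
  · rfl
  · intro i hi j hj _; rw [h0 hi, h0 hj]
  · intro i hi; rw [h0 hi]; exact hw
  · intro i hi; rw [h0 hi]; exact hd
  · intro i hi; rw [h0 hi]; exact List.nodup_nil
  · intro i hi j; rw [h0 hi]
    constructor
    · intro h; exact absurd h (List.not_mem_nil)
    · rintro ⟨h1, h2⟩; rw [h0 h1] at h2; exact (C.graph.loopless.irrefl _ h2).elim
  · intro i hi; rw [h0 hi]; exact Nat.zero_lt_one
  · intro i hi j hj _; rw [h0 hi, h0 hj]
  · change w - d < 4 ^ 1; omega
  · intro i hi; rw [h0 hi, haw]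
    change ((w - d : ℕ) : ℤ) = (((w - d) / 4 ^ 0 % 4 : ℕ) : ℤ)
    rw [pow_zero, Nat.div_one, Nat.mod_eq_of_lt (by omega)]
  · intro x hx; exact absurd hx (List.not_mem_nil)
  · intro x hx
    change x ∈ ite' (Nat.ble 2 (Nat.sub w d)) [0] [] at hx
    rw [ite'_eq] at hx
    cases hc : Nat.ble 2 (Nat.sub w d) with
    | false => rw [hc] at hx; exact absurd hx (List.not_mem_nil)
    | true =>
      rw [hc, cond_true, List.mem_singleton] at hx
      subst hx
      rw [ble_iff] at hc
      change 2 ≤ w - d at hc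
      refine ⟨Nat.zero_lt_one, by omega⟩

theorem stC : stageC = true := by decide +kernel

structure Env0 (C : Config) (N : ℕ) (φ : C.V → Fin N → ℤ) : Prop where
  hl : C.IsLinear
  hwc : C.WorkingConditions
  B : BadFacts C
  hφ : C.IsEmbedding N φ

theorem sq_le {C : Config} {N : ℕ} {φ : C.V → Fin N → ℤ} (hφ : C.IsEmbedding N φ) (v : C.V) (k : Fin N) :
    φ v k * φ v k ≤ C.w v := by
  have := hφ v v
  rw [if_pos rfl] at this
  rw [← this]
  unfold dot
  exact Finset.single_le_sum (f := fun i => φ v i * φ v i) (fun i _ => mul_self_nonneg _) (Finset.mem_univ k)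

theorem ab2 {x : ℤ} (h : x * x ≤ 5) : |x| ≤ 2 := by
  rw [abs_le]; constructor <;> nlinarith

theorem ab1 {x : ℤ} (h : x * x ≤ 3) : |x| ≤ 1 := by
  rw [abs_le]; constructor <;> nlinarith

theorem w5 {C : Config} (hl : C.IsLinear) (hwc : C.WorkingConditions) (v : C.V) : C.w v ≤ 5 := by
  have := hl.1 v
  have := hwc.2.1 v
  unfold Config.adjw at this; omega

theorem nbr_of_deg {C : Config} {v : C.V} (h : C.deg v ≠ 0) : ∃ z, C.graph.Adj v z := by
  unfold Config.deg at h
  obtain ⟨z, hz⟩ := Set.nonempty_of_ncard_ne_zero h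
  exact ⟨z, hz⟩

theorem toEnv {C : Config} {N : ℕ} {φ : C.V → Fin N → ℤ} (hl : C.IsLinear) (hwc : C.WorkingConditions)
    (B : BadFacts C) (hφ : C.IsEmbedding N φ) : Env C N φ :=
  ⟨hl, hwc, B, hφ, fun v k => ab2 ((sq_le hφ v k).trans (w5 hl hwc v))⟩

theorem light_small {C : Config} {N : ℕ} {φ : C.V → Fin N → ℤ} (E : Env C N φ) (v : C.V) (h : C.adjw v ≤ 1) (k : Fin N) :
    |φ v k| ≤ 1 := by
  apply ab1
  have h1 := sq_le E.hφ v k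
  have := E.hl.1 v
  unfold Config.adjw at h
  omega

theorem small {C : Config} {N : ℕ} {φ : C.V → Fin N → ℤ} (E : Env C N φ) (v : C.V) (k : Fin N) :
    |φ v k| ≤ 1 := by
  by_contra hk
  have h2 := abs_le.1 (E.b2 v k)
  have hne : φ v k = 2 ∨ φ v k = -2 := by
    by_contra hh
    apply hk; rw [abs_le]; omega
  have hsq : φ v k * φ v k = 4 := by rcases hne with h | h <;> rw [h] <;> norm_num
  have hw4 := sq_le E.hφ v k
  have hw5 := w5 E.hl E.hwc v
  have hd2 := E.hl.1 v
  have h3 := E.hwc.2.1 v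
  have hh : 1 < C.adjw v := by
    by_contra hlt; exact hk (light_small E v (by omega) k)
  have hvv := E.hφ v v
  rw [if_pos rfl] at hvv
  unfold dot at hvv
  rw [← Finset.add_sum_erase _ _ (Finset.mem_univ k), hsq] at hvv
  have hnn : ∀ i ∈ Finset.univ.erase k, 0 ≤ φ v i * φ v i := fun i _ => mul_self_nonneg _
  have h3' := h3
  unfold Config.adjw at h3'
  rcases (show C.w v = 4 ∨ C.w v = 5 by omega) with hw | hw
  · -- weight four
    obtain ⟨z, hz⟩ := nbr_of_deg (C := C) (v := v) (by omega)
    have h0 : ∑ i ∈ Finset.univ.erase k, φ v i * φ v i = 0 := by omega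
    rw [Finset.sum_eq_zero_iff_of_nonneg hnn] at h0
    have hvz := E.hφ v z
    rw [if_neg hz.ne, if_pos hz] at hvz
    unfold dot at hvz
    rw [← Finset.add_sum_erase _ _ (Finset.mem_univ k), Finset.sum_eq_zero, add_zero] at hvz
    · rcases hne with h | h <;> rw [h] at hvz <;> omega
    · intro i hi
      rw [mul_self_eq_zero.1 (h0 i hi), zero_mul]
  · -- weight five
    have h1 : ∑ i ∈ Finset.univ.erase k, φ v i * φ v i = 1 := by omega
    obtain ⟨l, hl, hl0⟩ : ∃ l ∈ Finset.univ.erase k, φ v l * φ v l ≠ 0 := by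
      by_contra hno
      push Not at hno
      rw [Finset.sum_eq_zero hno] at h1; omega
    rw [← Finset.add_sum_erase _ _ hl] at h1
    have hnn' : ∀ i ∈ (Finset.univ.erase k).erase l, 0 ≤ φ v i * φ v i := fun i _ => mul_self_nonneg _
    have hs := Finset.sum_nonneg hnn'
    have hpos : 0 < φ v l * φ v l := lt_of_le_of_ne (mul_self_nonneg _) (Ne.symm hl0)
    have hl1 : φ v l * φ v l = 1 := by omega
    have h0 : ∑ i ∈ (Finset.univ.erase k).erase l, φ v i * φ v i = 0 := by omega
    rw [Finset.sum_eq_zero_iff_of_nonneg hnn'] at h0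
    have hz0 : ∀ i, i ≠ k → i ≠ l → φ v i = 0 := by
      intro i h1 h2
      exact mul_self_eq_zero.1 (h0 i (by simp [h1, h2]))
    have hlk : l ≠ k := (Finset.mem_erase.1 hl).1
    have hla : φ v l = 1 ∨ φ v l = -1 := mul_self_eq_one_iff.1 hl1
    have hQ : ∀ i, Qf φ (fun _ => v) 1 i = φ v i := by intro i; rw [Qf_succ]; simp [Qf]
    have hM : ∀ i, Mf φ (fun _ => v) 1 i = if φ v i = 0 then 0 else 1 := by intro i; rw [Mf_succ]; simp [Mf]
    have R : Real C N φ ⟨gs1 5 2, [⟨2, 1, 1⟩, ⟨1, 1, 1⟩]⟩ (fun _ => v) := by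
      refine ⟨GOK_gs1 C _ 5 2 (by rw [hw]; rfl) (by omega) (by norm_num) (by norm_num), ?_, ?_⟩
      · change GR (fun i => (Qf φ (fun _ => v) 1 i).natAbs) (Mf φ (fun _ => v) 1) [⟨2, 1, 1⟩, ⟨1, 1, 1⟩]
          (Finset.univ.filter fun i => Mf φ (fun _ => v) 1 i ≠ 0)
        have hU : (Finset.univ.filter fun i => Mf φ (fun _ => v) 1 i ≠ 0) = {k, l} := by
          ext i
          simp only [Finset.mem_filter, Finset.mem_univ, true_and, Finset.mem_insert, Finset.mem_singleton]
          rw [hM]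
          by_cases hik : i = k
          · subst hik; rcases hne with h | h <;> simp [h]
          by_cases hil : i = l
          · subst hil; rcases hla with h | h <;> simp [h]
          rw [hz0 i hik hil]; simp [hik, hil]
        rw [hU]
        refine ⟨{k}, by simp, rfl, ?_, {l}, ?_, rfl, ?_, ?_⟩
        · intro i hi; rw [Finset.mem_singleton] at hi; subst hi
          rw [hM]; dsimp only; rw [hQ]
          rcases hne with h | h <;> simp [h]
        · simp [hlk]
        · intro i hi; rw [Finset.mem_singleton] at hi; subst hi
          rw [hM]; dsimp only; rw [hQ]
          rcases hla with h | h <;> simp [h]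
        · change _ = ∅
          ext i; simp; tauto
      · intro y hy i
        apply light_small E
        by_contra hy1
        exact hy 0 Nat.zero_lt_one (E.hwc.2.2.1 _ _ hh (by omega))
    obtain ⟨_, _, _, h, _⟩ := search_sound E (thr := 0) (by intro u v _ _ _ h; omega) _ 12 _ _ R stC
    exact Bool.false_ne_true h

theorem Real_st1 {C : Config} {N : ℕ} {φ : C.V → Fin N → ℤ} (E : Env C N φ) (u : C.V) (w : ℕ) (hw : C.w u = w) :
    Real C N φ (st1 w (C.deg u)) (fun _ => u) := by
  have hd2 := E.hl.1 u
  have hw2 := E.hwc.1 u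
  have h3 := E.hwc.2.1 u
  unfold Config.adjw at h3
  refine ⟨GOK_gs1 C _ _ _ hw rfl (by omega) (by omega), ?_, fun v _ => small E v⟩
  have hQ : ∀ i, Qf φ (fun _ => u) 1 i = φ u i := by intro i; rw [Qf_succ]; simp [Qf]
  have hM : ∀ i, Mf φ (fun _ => u) 1 i = if φ u i = 0 then 0 else 1 := by intro i; rw [Mf_succ]; simp [Mf]
  change GR (fun i => (Qf φ (fun _ => u) 1 i).natAbs) (Mf φ (fun _ => u) 1) [⟨1, 1, w⟩]
          (Finset.univ.filter fun i => Mf φ (fun _ => u) 1 i ≠ 0)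
  have hU : (Finset.univ.filter fun i => Mf φ (fun _ => u) 1 i ≠ 0) = Finset.univ.filter fun i => φ u i ≠ 0 := by
    ext i
    simp only [Finset.mem_filter, Finset.mem_univ, true_and]
    rw [hM]
    split_ifs with h <;> simp [h]
  rw [hU]
  refine ⟨_, Finset.Subset.refl _, ?_, ?_, ?_⟩
  · have h1 := card_supp (φ u) (small E u)
    rw [E.hφ, if_pos rfl, hw] at h1
    exact_mod_cast h1
  · intro i hi
    have hi := (Finset.mem_filter.1 hi).2
    rw [hM]; dsimp only; rw [hQ, if_neg hi]
    rcases small3 (small E u i) with h | h | h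
    · exact absurd h hi
    · rw [h]; exact ⟨rfl, rfl⟩
    · rw [h]; exact ⟨rfl, rfl⟩
  · exact Finset.sdiff_self _

theorem kinds_mem {C : Config} (hl : C.IsLinear) (hwc : C.WorkingConditions) (u : C.V) (w : ℕ) (hw : C.w u = w) :
    (w, C.deg u) ∈ kinds := by
  have h2 := hl.1 u
  have h3 := hwc.2.1 u
  have h4 := hwc.1 u
  unfold Config.adjw at h3
  generalize hdd : C.deg u = d at *
  unfold kinds
  simp only [List.mem_cons, Prod.mk.injEq, List.not_mem_nil, or_false]
  omega

theorem start_sound {C : Config} {N : ℕ} {φ : C.V → Fin N → ℤ} (E : Env C N φ) {thr : ℕ} (hP : PT C N φ thr)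
    (acc : St → Bool) (A : List ℕ) (flt : ℕ × ℕ → ℕ × ℕ → Bool) (u v : C.V) (huv : u ≠ v)
    (hA : A = [0] ∧ C.graph.Adj v u ∨ A = [] ∧ ¬ C.graph.Adj v u)
    (hf : flt ((C.w u).toNat, C.deg u) ((C.w v).toNat, C.deg v) = true)
    (h : start thr acc A flt = true) :
    ∃ st f, Real C N φ st f ∧ acc st = true ∧ 2 ≤ st.S.n ∧ f 0 = u ∧ f 1 = v := by
  have hu4 := E.hwc.1 u
  have hv4 := E.hwc.1 v
  have hwu : C.w u = (C.w u).toNat := by omega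
  have hwv : C.w v = (C.w v).toNat := by omega
  generalize (C.w u).toNat = wu at *
  generalize (C.w v).toNat = wv at *
  unfold start at h
  rw [all'_iff] at h
  have h := h _ (kinds_mem E.hl E.hwc u wu hwu)
  rw [all'_iff] at h
  have h := h _ (kinds_mem E.hl E.hwc v wv hwv)
  rw [or'_iff, or'_iff, not'_iff, and'_iff] at h
  rcases h with h | h | h
  · exact absurd hf h
  · exfalso
    unfold heavy at h
    rw [ble_iff, ble_iff] at h
    change 2 ≤ wu - C.deg u ∧ 2 ≤ wv - C.deg v at h
    apply huv
    apply E.hwc.2.2.1 <;> unfold Config.adjw <;> omega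
  · have R := Real_st1 E u wu hwu
    obtain ⟨st1, R1, hs, hk⟩ := add_sound E hP R v (fun i _ => huv) A
      (by rcases hA with ⟨rfl, _⟩ | ⟨rfl, _⟩ <;> simp)
      (by
        intro j
        change _ ↔ j < 1 ∧ _
        rcases hA with ⟨rfl, h⟩ | ⟨rfl, h⟩
        · rw [List.mem_singleton, Nat.lt_one_iff]; exact ⟨fun e => ⟨e, by assumption⟩, fun e => e.1⟩
        · exact ⟨fun e => absurd e List.not_mem_nil, fun e => absurd e.2 (by assumption)⟩)
      wv (C.deg v) hwv rfl _ h
    obtain ⟨st', f', R', ha, hn, hf⟩ := search_sound E hP acc 12 _ _ R1 hk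
    have e1 : st1.S.n = 2 := by rw [hs]; rfl
    refine ⟨st', f', R', ha, by omega, ?_, ?_⟩
    · rw [hf 0 (by omega)]
      change Function.update (fun _ => u) 1 v 0 = u
      simp
    · rw [hf 1 (by omega)]
      change Function.update (fun _ => u) 1 v 1 = v
      simp

/-- number of shared coordinates -/
def shc {C : Config} {N : ℕ} (φ : C.V → Fin N → ℤ) (u v : C.V) : ℕ := (supp (φ u) ∩ supp (φ v)).card

theorem shr_real {C : Config} {N : ℕ} {φ : C.V → Fin N → ℤ} {st : St} {f : ℕ → C.V} (R : Real C N φ st f)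
    (i j : ℕ) (hi : i < st.S.n) (hj : j < st.S.n) : shr st.G i j = (supp (φ (f i)) ∩ supp (φ (f j))).card := by
  rw [GR_shr i j R.r]
  congr 1
  ext k
  simp only [Finset.mem_filter, Finset.mem_univ, true_and, Finset.mem_inter, supp, bt_iff, Mf_bit, hi, hj]
  constructor
  · rintro ⟨_, h⟩; exact h
  · intro h; refine ⟨?_, h⟩
    intro h0
    have := (Mf_bit φ f k i st.S.n).2 ⟨hi, h.1⟩
    rw [h0] at this; simp at this

theorem tri_real {C : Config} {N : ℕ} {φ : C.V → Fin N → ℤ} {st : St} {f : ℕ → C.V} (R : Real C N φ st f)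
    (i j l : ℕ) (hi : i < st.S.n) (hj : j < st.S.n) (hl : l < st.S.n) :
    tri st.G i j l = (supp (φ (f i)) ∩ supp (φ (f l)) ∩ supp (φ (f j))).card := by
  rw [GR_tri i j l R.r]
  congr 1
  ext k
  simp only [Finset.mem_filter, Finset.mem_univ, true_and, Finset.mem_inter, supp, bt_iff, Mf_bit, hi, hj, hl]
  constructor
  · rintro ⟨_, h⟩; tauto
  · intro h; refine ⟨?_, by tauto⟩
    intro h0
    have := (Mf_bit φ f k i st.S.n).2 ⟨hi, h.1.1⟩
    rw [h0] at this; simp at this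

theorem stN18 : stageN 18 = true := by decide +kernel
theorem stN26 : stageN 26 = true := by decide +kernel
theorem stN27 : stageN 27 = true := by decide +kernel
theorem stN34 : stageN 34 = true := by decide +kernel
theorem stN35 : stageN 35 = true := by decide +kernel
theorem stN42 : stageN 42 = true := by decide +kernel
theorem stN43 : stageN 43 = true := by decide +kernel
theorem stN_rest : all' (rng 46) (fun t => or' (mem t [18, 26, 27, 34, 35, 42, 43]) (stageN t)) = true := by
  decide +kernel
theorem stA : stageA = true := by decide +kernel
theorem stD : stageD = true := by decide +kernel

theorem stN (t : ℕ) (ht : t < 46) : stageN t = true := by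
  have h := (all'_iff _ _).1 stN_rest t ((mem_rng _ _).2 ht)
  rw [or'_iff, mem_iff] at h
  rcases h with h | h
  · simp only [List.mem_cons, List.not_mem_nil, or_false] at h
    rcases h with rfl | rfl | rfl | rfl | rfl | rfl | rfl
    · exact stN18
    · exact stN26
    · exact stN27
    · exact stN34
    · exact stN35
    · exact stN42
    · exact stN43
  · exact h

def GoodN {C : Config} {N : ℕ} (φ : C.V → Fin N → ℤ) (u v : C.V) : Prop :=
  shc φ u v = 0 ∨ (0 < C.adjw u ∧ 0 < C.adjw v ∧ shc φ u v = 2 ∧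
    ∃ x, C.graph.Adj u x ∧ C.graph.Adj v x ∧ (supp (φ u) ∩ supp (φ x) ∩ supp (φ v)).card = 1)

theorem tri_comm {N : ℕ} (a b c : Finset (Fin N)) : a ∩ b ∩ c = c ∩ b ∩ a := by
  ext; simp only [Finset.mem_inter]; tauto

theorem shc_comm {C : Config} {N : ℕ} (φ : C.V → Fin N → ℤ) (u v : C.V) : shc φ u v = shc φ v u := by
  unfold shc; rw [Finset.inter_comm]

theorem GoodN.symm {C : Config} {N : ℕ} {φ : C.V → Fin N → ℤ} {u v : C.V} (h : GoodN φ u v) : GoodN φ v u := by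
  rcases h with h | ⟨h1, h2, h3, x, h4, h5, h6⟩
  · left; rw [shc_comm]; exact h
  · right; exact ⟨h2, h1, by rw [shc_comm]; exact h3, x, h5, h4, by rw [tri_comm]; exact h6⟩

theorem code_comm (a b : ℕ) : code a b = code b a := by
  unfold code
  rw [ite'_eq, ite'_eq]
  cases h1 : Nat.ble a b <;> cases h2 : Nat.ble b a
  · exfalso
    have h1 : ¬ a ≤ b := fun h => by rw [(ble_iff _ _).2 h] at h1; exact Bool.noConfusion h1
    have h2 : ¬ b ≤ a := fun h => by rw [(ble_iff _ _).2 h] at h2; exact Bool.noConfusion h2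
    omega
  · rfl
  · rfl
  · have := (ble_iff _ _).1 h1
    have := (ble_iff _ _).1 h2
    have : a = b := by omega
    subst this; rfl

theorem code_lt (a b : ℕ) (ha : a ≤ 5) (hb : b ≤ 5) : code a b < 46 := by
  unfold code
  rw [ite'_eq]
  cases h1 : Nat.ble a b
  · change 8 * a + b < 46; omega
  · change 8 * b + a < 46; omega

theorem ord_total (p q : ℕ × ℕ) : ord p q = true ∨ ord q p = true := by
  unfold ord
  rw [ble_iff, ble_iff]
  exact le_total _ _

theorem accN_sound {C : Config} {N : ℕ} {φ : C.V → Fin N → ℤ} {st : St} {f : ℕ → C.V}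
    (R : Real C N φ st f) (hn : 2 ≤ st.S.n) (h : accN st = true) : GoodN φ (f 0) (f 1) := by
  unfold accN at h
  rw [or'_iff, and'_iff, and'_iff, and'_iff, beq_iff, beq_iff, ble_iff, ble_iff, any'_iff,
    shr_real R 0 1 (by omega) (by omega)] at h
  rcases h with h | ⟨h1, h2, h3, x, hx, h4⟩
  · exact Or.inl h
  · rw [and'_iff, mem_iff, beq_iff] at h4
    have hx0 := (R.g.nbm 0 (by omega) x).1 hx
    have hx1 := (R.g.nbm 1 (by omega) x).1 h4.1
    have h5 := h4.2
    rw [tri_real R 0 1 x (by omega) (by omega) hx0.1] at h5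
    right
    refine ⟨?_, ?_, h3, f x, hx0.2, hx1.2, h5⟩
    · rw [R.g.awt 0 (by omega)]; exact_mod_cast h1
    · rw [R.g.awt 1 (by omega)]; exact_mod_cast h2

theorem goodN_step {C : Config} {N : ℕ} {φ : C.V → Fin N → ℤ} (E : Env C N φ) {t : ℕ} (ht : t < 46)
    (hP : PT C N φ t) (u v : C.V) (huv : u ≠ v) (hadj : ¬ C.graph.Adj u v)
    (hc : code (C.w u).toNat (C.w v).toNat = t) : GoodN φ u v := by
  have hs := stN t ht
  unfold stageN at hs
  have key : ∀ u v : C.V, u ≠ v → ¬ C.graph.Adj u v → code (C.w u).toNat (C.w v).toNat = t →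
      ord ((C.w u).toNat, C.deg u) ((C.w v).toNat, C.deg v) = true → GoodN φ u v := by
    intro u v huv hadj hc ho
    obtain ⟨st, f, R, ha, hn, h0, h1⟩ := start_sound E hP accN [] (fltN t) u v huv
      (Or.inr ⟨rfl, fun h => hadj h.symm⟩) (by unfold fltN; rw [and'_iff, beq_iff]; exact ⟨ho, hc⟩) hs
    have := accN_sound R hn ha
    rwa [h0, h1] at this
  rcases ord_total ((C.w u).toNat, C.deg u) ((C.w v).toNat, C.deg v) with h | h
  · exact key u v huv hadj hc h
  · exact (key v u huv.symm (fun h => hadj h.symm) (by rw [code_comm]; exact hc) h).symm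

theorem shc_zero {C : Config} {N : ℕ} {φ : C.V → Fin N → ℤ} {u v : C.V} (h : shc φ u v = 0) (k : Fin N) :
    φ u k = 0 ∨ φ v k = 0 := by
  unfold shc at h
  rw [Finset.card_eq_zero] at h
  by_contra hh
  push Not at hh
  have : k ∈ supp (φ u) ∩ supp (φ v) := by simp [supp, hh]
  rw [h] at this; simp at this

theorem PT_all {C : Config} {N : ℕ} {φ : C.V → Fin N → ℤ} (E : Env C N φ) : ∀ t, t ≤ 46 → PT C N φ t
  | 0, _ => by intro u v _ _ _ h; omega
  | t + 1, ht => by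
    have ih := PT_all E t (by omega)
    intro u v huv hadj haw hc
    rcases Nat.lt_succ_iff_lt_or_eq.1 hc with hc | hc
    · exact ih u v huv hadj haw hc
    · rcases goodN_step E (by omega) ih u v huv hadj hc with h | ⟨h1, h2, _⟩
      · exact shc_zero h
      · omega

theorem wle {C : Config} {N : ℕ} {φ : C.V → Fin N → ℤ} (E : Env C N φ) (u : C.V) : (C.w u).toNat ≤ 5 := by
  have := w5 E.hl E.hwc u; omega

theorem PT64 {C : Config} {N : ℕ} {φ : C.V → Fin N → ℤ} (E : Env C N φ) : PT C N φ 64 := by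
  intro u v huv hadj haw _
  exact PT_all E 46 (le_refl _) u v huv hadj haw (code_lt _ _ (wle E u) (wle E v))

theorem goodN {C : Config} {N : ℕ} {φ : C.V → Fin N → ℤ} (E : Env C N φ) (u v : C.V) (huv : u ≠ v)
    (hadj : ¬ C.graph.Adj u v) : GoodN φ u v := by
  have h := code_lt _ _ (wle E u) (wle E v)
  exact goodN_step E h (PT_all E _ h.le) u v huv hadj rfl

theorem goodA {C : Config} {N : ℕ} {φ : C.V → Fin N → ℤ} (E : Env C N φ) (u v : C.V)
    (hadj : C.graph.Adj u v) : shc φ u v = 1 := by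
  have key : ∀ u v : C.V, C.graph.Adj u v →
      ord ((C.w u).toNat, C.deg u) ((C.w v).toNat, C.deg v) = true → shc φ u v = 1 := by
    intro u v hadj ho
    obtain ⟨st, f, R, ha, hn, h0, h1⟩ := start_sound E (PT64 E) accA [0] fltA u v hadj.ne
      (Or.inl ⟨rfl, hadj.symm⟩)
      (by unfold fltA; rw [and'_iff, and'_iff, ble_iff, ble_iff]; exact ⟨deg_pos hadj, deg_pos hadj.symm, ho⟩) stA
    unfold accA at ha
    rw [beq_iff, shr_real R 0 1 (by omega) (by omega), h0, h1] at ha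
    exact ha
  rcases ord_total ((C.w u).toNat, C.deg u) ((C.w v).toNat, C.deg v) with h | h
  · exact key u v hadj h
  · rw [shc_comm]; exact key v u hadj.symm h

def Centre {C : Config} {N : ℕ} (φ : C.V → Fin N → ℤ) (x p q : C.V) : Prop :=
  p ≠ q ∧ C.graph.Adj x p ∧ C.graph.Adj x q ∧ 0 < C.adjw p ∧ 0 < C.adjw q ∧ shc φ p q = 2 ∧
    (supp (φ p) ∩ supp (φ x) ∩ supp (φ q)).card = 1

theorem centre_any {C : Config} (hl : C.IsLinear) {N : ℕ} {φ : C.V → Fin N → ℤ} {x p q u v : C.V}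
    (h : Centre φ x p q) (huv : u ≠ v) (hu : C.graph.Adj x u) (hv : C.graph.Adj x v) :
    shc φ u v = 2 ∧ (supp (φ u) ∩ supp (φ x) ∩ supp (φ v)).card = 1 := by
  obtain ⟨hpq, hp, hq, _, _, h1, h2⟩ := h
  rcases deg_two hl hpq hp hq hu with rfl | rfl <;> rcases deg_two hl hpq hp hq hv with rfl | rfl
  · exact absurd rfl huv
  · exact ⟨h1, h2⟩
  · rw [shc_comm, tri_comm]; exact ⟨h1, h2⟩
  · exact absurd rfl huv

theorem accD1_false {C : Config} (hl : C.IsLinear) {N : ℕ} {φ : C.V → Fin N → ℤ} {st : St} {f : ℕ → C.V}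
    (R : Real C N φ st f) (i : ℕ) (hi : i < st.S.n) {p q : C.V} (hc : Centre φ (f i) p q)
    (h : accD1 st i = true) : False := by
  unfold accD1 at h
  rw [any'_iff] at h
  obtain ⟨a, ha, h⟩ := h
  obtain ⟨han, haa⟩ := (R.g.nbm i hi a).1 ha
  rw [or'_iff, beq_iff, any'_iff] at h
  rcases h with h | ⟨b, hb, h⟩
  · have h1 := R.g.awt a han
    rw [h] at h1
    obtain ⟨hpq, hp, hq, hp0, hq0, _⟩ := hc
    rcases deg_two hl hpq hp hq haa with e | e <;> rw [e] at h1 <;> simp at h1 <;> omega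
  · obtain ⟨hbn, hba⟩ := (R.g.nbm i hi b).1 hb
    rw [and'_iff, bneq, or'_iff, bneq, bneq, shr_real R _ _ han hbn, tri_real R _ _ _ han hbn hi] at h
    obtain ⟨h1, h2⟩ := centre_any hl hc (fun e => h.1 (R.g.inj _ han _ hbn e)) haa hba
    rcases h.2 with h3 | h3
    · exact h3 h1
    · exact h3 h2

theorem centre_unique {C : Config} {N : ℕ} {φ : C.V → Fin N → ℤ} (E : Env C N φ) {x y p q r s : C.V}
    (hx : Centre φ x p q) (hy : Centre φ y r s) : x = y := by
  by_contra hxy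
  have key : ∀ {x y p q r s : C.V}, x ≠ y → Centre φ x p q → Centre φ y r s →
      ord ((C.w x).toNat, C.deg x) ((C.w y).toNat, C.deg y) = true → False := by
    intro x y p q r s hxy hx hy ho
    have hs := stD
    unfold stageD at hs
    rw [and'_iff] at hs
    have hflt : fltD ((C.w x).toNat, C.deg x) ((C.w y).toNat, C.deg y) = true := by
      unfold fltD; rw [and'_iff, and'_iff, beq_iff, beq_iff]
      exact ⟨(deg_eq_two E.hl hx.1 hx.2.1 hx.2.2.1).symm, (deg_eq_two E.hl hy.1 hy.2.1 hy.2.2.1).symm, ho⟩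
    have hex : ∃ st f, Real C N φ st f ∧ accD st = true ∧ 2 ≤ st.S.n ∧ f 0 = x ∧ f 1 = y := by
      by_cases hadj : C.graph.Adj y x
      · exact start_sound E (PT64 E) accD [0] fltD x y hxy (Or.inl ⟨rfl, hadj⟩) hflt hs.1
      · exact start_sound E (PT64 E) accD [] fltD x y hxy (Or.inr ⟨rfl, hadj⟩) hflt hs.2
    obtain ⟨st, f, R, ha, hn, h0, h1⟩ := hex
    unfold accD at ha
    rw [or'_iff] at ha
    rw [← h0] at hx
    rw [← h1] at hy
    rcases ha with ha | ha
    · exact accD1_false E.hl R 0 (by omega) hx ha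
    · exact accD1_false E.hl R 1 (by omega) hy ha
  rcases ord_total ((C.w x).toNat, C.deg x) ((C.w y).toNat, C.deg y) with h | h
  · exact key hxy hx hy h
  · exact key (Ne.symm hxy) hy hx h

theorem main (C : Config) (hlin : C.IsLinear) (hwc : C.WorkingConditions)
    (hbad : ∃ x : C.V, C.IsBad x) (N : ℕ) (φ : C.V → Fin N → ℤ) (hφ : C.IsEmbedding N φ) :
    C.IsStandard N φ ∨ C.IsSemiStandard N φ := by
  have E : Env C N φ := toEnv hlin hwc (badFacts hlin hwc hbad) hφ
  have hself : ∀ v : C.V, ((supp (φ v) ∩ supp (φ v)).card : ℤ) = C.w v := by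
    intro v
    have h1 := card_supp (φ v) (small E v)
    rw [E.hφ, if_pos rfl] at h1
    rw [Finset.inter_self]; exact h1
  have hA : ∀ u v : C.V, C.graph.Adj u v → (supp (φ u) ∩ supp (φ v)).card = 1 := goodA E
  by_cases hst : ∀ u v : C.V, u ≠ v → ¬ C.graph.Adj u v → shc φ u v = 0
  · left
    intro u _ v _
    split_ifs with h1 h2
    · subst h1; exact hself u
    · exact_mod_cast hA u v h2
    · exact_mod_cast hst u v h1 h2
  · right
    push Not at hst
    have hcen : ∀ u v : C.V, u ≠ v → ¬ C.graph.Adj u v → shc φ u v ≠ 0 → ∃ x, Centre φ x u v := by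
      intro u v huv hadj hne
      rcases goodN E u v huv hadj with h | ⟨h1, h2, h3, x, h4, h5, h6⟩
      · exact absurd h hne
      · exact ⟨x, huv, h4.symm, h5.symm, h1, h2, h3, h6⟩
    obtain ⟨p, q, hpq, hadj, hne⟩ := hst
    obtain ⟨x, hx⟩ := hcen p q hpq hadj hne
    refine ⟨x, ⟨p, q, hpq, hx.2.1, hx.2.2.1, hx.2.2.2.1, hx.2.2.2.2.1⟩, ?_, ?_⟩
    · intro u _ v _
      split_ifs with h1 h2 h3
      · subst h1; exact hself u
      · exact_mod_cast hA u v h2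
      · exact_mod_cast (centre_any hlin hx h1 h3.1 h3.2).1
      · by_contra hne'
        have hne' : shc φ u v ≠ 0 := fun h => hne' (by exact_mod_cast h)
        obtain ⟨y, hy⟩ := hcen u v h1 h2 hne'
        have := centre_unique E hx hy
        subst this
        exact h3 ⟨hy.2.1, hy.2.2.1⟩
    · intro u _ v _ huv hu hv
      exact (centre_any hlin hx huv hu hv).2

end Srch

/-- Lemma 5.13: every embedding of a configuration satisfying the Working Conditions
with at least one bad vertex is either standard or semi-standard. -/
theorem statement12 (C : Config) (hlin : C.IsLinear) (hwc : C.WorkingConditions)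
    (hbad : ∃ x : C.V, C.IsBad x) (N : ℕ) (hN : 0 < N)
    (φ : C.V → Fin N → ℤ) (hφ : C.IsEmbedding N φ) :
    C.IsStandard N φ ∨ C.IsSemiStandard N φ := Srch.main C hlin hwc hbad N φ hφ

end LensPaper
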